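/- arXiv:2512.01240 — 7 statements merged into one kernel-verified Lean document; each statement's English description precedes it below -/
import Mathlib

section
/- Let E be a finite set, C > 0 a real number, ε ∈ (0,1), p ∈ (0,1], and w : E → ℝ with 0 ≤ w_i ≤ C for every i ∈ E and ∑_{i∈E} w_i ≥ (τ(ε)/p)·C. If R is the p-sampled active set of E, then the probability that ∑_{i∈R} w_i ≥ C is at least 1 − ε. -/
open Finset

/-- `τ(ε) := 1 + ln(1/ε) + √(ln²(1/ε) + 2 ln(1/ε))`. -/
noncomputable def tau (ε : ℝ) : ℝ :=
  1 + Real.log (1 / ε) + Real.sqrt ((Real.log (1 / ε)) ^ 2 + 2 * Real.log (1 / ε))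

open scoped Classical in
/-- Probability, under independent `p`-sampling of the elements of `E`, that the random
active set `R ⊆ E` satisfies the predicate `pred`. -/
noncomputable def samplePr {ι : Type*} [DecidableEq ι] (E : Finset ι) (p : ℝ)
    (pred : Finset ι → Prop) : ℝ :=
  ∑ A ∈ E.powerset, if pred A then p ^ A.card * (1 - p) ^ (E.card - A.card) else 0

theorem tau_aux (ε : ℝ) (hε : ε ∈ Set.Ioo (0 : ℝ) 1) :
    1 < tau ε ∧ Real.exp (Real.log (tau ε) - tau ε + 1) ≤ ε := by
  have hL : 0 < Real.log (1 / ε) := Real.log_pos (by rw [lt_div_iff₀ hε.1]; linarith [hε.2])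
  have hε' : ε = Real.exp (- Real.log (1 / ε)) := by
    rw [one_div, Real.log_inv, neg_neg, Real.exp_log hε.1]
  set L := Real.log (1 / ε) with hLdef
  have hs : Real.sqrt (L ^ 2 + 2 * L) ^ 2 = L ^ 2 + 2 * L := Real.sq_sqrt (by positivity)
  have hs0 := Real.sqrt_nonneg (L ^ 2 + 2 * L)
  have ht : tau ε = 1 + L + Real.sqrt (L ^ 2 + 2 * L) := rfl
  have h1 : 1 < tau ε := by rw [ht]; linarith
  refine ⟨h1, ?_⟩
  have hq : (tau ε - 1) ^ 2 = 2 * L * tau ε := by rw [ht]; linear_combination hs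
  generalize tau ε = t at *
  have hpos : 0 < t := by linarith
  rw [hε', Real.exp_le_exp]
  have h2 : Real.log t ≤ Real.sinh (Real.log t) :=
    Real.self_le_sinh_iff.2 (Real.log_nonneg h1.le)
  rw [Real.sinh_log hpos] at h2
  have h3 : L = (t - 1) ^ 2 / (2 * t) := by rw [hq]; field_simp
  have h4 : (t - t⁻¹) / 2 - t + 1 = -((t - 1) ^ 2 / (2 * t)) := by field_simp; ring
  rw [h3]; linarith

theorem conv_aux (s x : ℝ) (h0 : 0 ≤ x) (h1 : x ≤ 1) :
    Real.exp (-(s * x)) ≤ 1 - x * (1 - Real.exp (-s)) := by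
  have h := convexOn_exp.2 (Set.mem_univ (-s)) (Set.mem_univ 0) h0
    (sub_nonneg.2 h1) (by ring)
  simp only [smul_eq_mul, mul_zero, add_zero, Real.exp_zero] at h
  rw [show -(s * x) = x * -s by ring]
  linarith

/-- **Activation Weight Concentration.** If the total weight of `E` is at least
`(τ(ε)/p)·C`, then the active weight is at least `C` with probability at least `1 - ε`. -/
theorem activation_weight_concentration {ι : Type*} [DecidableEq ι]
    (E : Finset ι) (C ε p : ℝ) (hC : 0 < C)
    (hε : ε ∈ Set.Ioo (0 : ℝ) 1) (hp : p ∈ Set.Ioc (0 : ℝ) 1)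
    (w : ι → ℝ) (hw : ∀ i ∈ E, 0 ≤ w i ∧ w i ≤ C)
    (hsum : (tau ε / p) * C ≤ ∑ i ∈ E, w i) :
    1 - ε ≤ samplePr E p (fun A => C ≤ ∑ i ∈ A, w i) := by
  obtain ⟨ht1, htε⟩ := tau_aux ε hε
  obtain ⟨hp0, hp1⟩ := hp
  set t := tau ε with htdef
  have ht0 : 0 < t := by linarith
  set s := Real.log t with hs
  have hs0 : 0 ≤ s := Real.log_nonneg ht1.le
  have hes : Real.exp (-s) = t⁻¹ := by rw [Real.exp_neg, hs, Real.exp_log ht0]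
  have htot : ∑ A ∈ E.powerset, p ^ A.card * (1 - p) ^ (E.card - A.card) = 1 := by
    rw [Finset.sum_pow_mul_eq_add_pow]; simp
  have hgen : ∑ A ∈ E.powerset, p ^ A.card * (1 - p) ^ (E.card - A.card) *
      Real.exp (s * (1 - (∑ i ∈ A, w i) / C)) =
      Real.exp s * ∏ i ∈ E, (p * Real.exp (-(s * (w i / C))) + (1 - p)) := by
    rw [Finset.prod_add, Finset.mul_sum]
    refine Finset.sum_congr rfl fun A hA => ?_
    have hA := Finset.mem_powerset.1 hA
    rw [Finset.prod_mul_distrib, Finset.prod_const, Finset.prod_const,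
      Finset.card_sdiff_of_subset hA, ← Real.exp_sum, Finset.sum_neg_distrib, ← Finset.mul_sum,
      ← Finset.sum_div, show s * (1 - (∑ i ∈ A, w i) / C) = s + -(s * ((∑ i ∈ A, w i) / C)) by ring,
      Real.exp_add]
    ring
  have hprod : ∏ i ∈ E, (p * Real.exp (-(s * (w i / C))) + (1 - p)) ≤
      Real.exp (∑ i ∈ E, -(p * (w i / C) * (1 - t⁻¹))) := by
    rw [Real.exp_sum]
    refine Finset.prod_le_prod (fun i _ => ?_) fun i hi => ?_
    · have := Real.exp_pos (-(s * (w i / C)))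
      have : 0 ≤ 1 - p := by linarith
      positivity
    · have h := conv_aux s (w i / C) (div_nonneg (hw i hi).1 hC.le)
        ((div_le_one hC).2 (hw i hi).2)
      rw [hes] at h
      have h2 := mul_le_mul_of_nonneg_left h hp0.le
      have h3 := Real.add_one_le_exp (-(p * (w i / C) * (1 - t⁻¹)))
      linarith
  have hmu : t ≤ p * ((∑ i ∈ E, w i) / C) := by
    rw [← le_div_iff₀ hC] at hsum
    rw [div_le_iff₀ hp0] at hsum
    linarith
  have hbound : Real.exp s * ∏ i ∈ E, (p * Real.exp (-(s * (w i / C))) + (1 - p)) ≤ ε := by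
    refine le_trans (mul_le_mul_of_nonneg_left hprod (Real.exp_pos s).le) (le_trans ?_ htε)
    rw [← Real.exp_add, Real.exp_le_exp, Finset.sum_neg_distrib, ← Finset.sum_mul,
      ← Finset.mul_sum, ← Finset.sum_div]
    have h1 : 0 ≤ 1 - t⁻¹ := sub_nonneg.2 (inv_le_one_of_one_le₀ ht1.le)
    have h2 := mul_le_mul_of_nonneg_right hmu h1
    have h3 : t * (1 - t⁻¹) = t - 1 := by field_simp
    linarith
  have hkey : (∑ A ∈ E.powerset, p ^ A.card * (1 - p) ^ (E.card - A.card)) - ∑ A ∈ E.powerset, p ^ A.card * (1 - p) ^ (E.card - A.card) *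
      Real.exp (s * (1 - (∑ i ∈ A, w i) / C)) ≤ samplePr E p (fun A => C ≤ ∑ i ∈ A, w i) := by
    rw [← Finset.sum_sub_distrib]
    unfold samplePr
    refine Finset.sum_le_sum fun A _ => ?_
    have hp' : 0 ≤ 1 - p := by linarith
    have hq : 0 ≤ p ^ A.card * (1 - p) ^ (E.card - A.card) := by positivity
    split_ifs with h
    · have := mul_nonneg hq (Real.exp_pos (s * (1 - (∑ i ∈ A, w i) / C))).le
      linarith
    · have hx : (∑ i ∈ A, w i) / C ≤ 1 := (div_le_one hC).2 (not_le.1 h).le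
      have he : 1 ≤ Real.exp (s * (1 - (∑ i ∈ A, w i) / C)) :=
        Real.one_le_exp (mul_nonneg hs0 (sub_nonneg.2 hx))
      have := mul_le_mul_of_nonneg_left he hq
      linarith
  rw [hgen, htot] at hkey
  linarith
end

section
/- Let E be a finite set, C > 0 a real number, p ∈ (0,1], and w : E → ℝ with 0 ≤ w_i ≤ C for every i ∈ E. Let R be the p-sampled active set of E and set μ := p·(∑_{i∈E} w_i)/C. If μ > 1, then Pr[∑_{i∈R} w_i < C] ≤ exp(−(μ−1)²/(2μ)). -/
open Finset

lemma exp_neg_le_quad (y : ℝ) (hy : 0 ≤ y) : Real.exp (-y) ≤ 1 - y + y ^ 2 / 2 := by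
  have h := Real.quadratic_le_exp_of_nonneg hy
  have hq : 0 < 1 - y + y ^ 2 / 2 := by nlinarith [sq_nonneg (y - 1)]
  rw [Real.exp_neg, inv_le_comm₀ (Real.exp_pos _) hq]
  refine le_trans ?_ h
  rw [inv_le_iff_one_le_mul₀ hq]
  nlinarith [sq_nonneg (y ^ 2)]

/-- If `μ := p·(∑_{i∈E} wᵢ)/C > 1`, then the probability that the active weight is
below `C` is at most `exp(-(μ-1)²/(2μ))`. -/
theorem active_weight_chernoff {ι : Type*} [DecidableEq ι]
    (E : Finset ι) (C p : ℝ) (hC : 0 < C) (hp : p ∈ Set.Ioc (0 : ℝ) 1)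
    (w : ι → ℝ) (hw : ∀ i ∈ E, 0 ≤ w i ∧ w i ≤ C)
    (μ : ℝ) (hμdef : μ = p * (∑ i ∈ E, w i) / C) (hμ : 1 < μ) :
    samplePr E p (fun A => (∑ i ∈ A, w i) < C) ≤ Real.exp (-(μ - 1) ^ 2 / (2 * μ)) := by
  obtain ⟨hp0, hp1⟩ := hp
  have hμ0 : 0 < μ := by linarith
  obtain ⟨t, ht⟩ : ∃ t, t = (μ - 1) / μ := ⟨_, rfl⟩
  have ht0 : 0 ≤ t := by rw [ht]; exact div_nonneg (by linarith) hμ0.le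
  have h1 : samplePr E p (fun A => (∑ i ∈ A, w i) < C) ≤
      ∑ A ∈ E.powerset, Real.exp t *
        ((∏ i ∈ A, p * Real.exp (-(t * (w i / C)))) * ∏ i ∈ E \ A, (1 - p)) := by
    unfold samplePr
    refine Finset.sum_le_sum fun A hA => ?_
    have hAE := Finset.mem_powerset.1 hA
    rw [Finset.prod_mul_distrib, Finset.prod_const, Finset.prod_const,
      Finset.card_sdiff_of_subset hAE, ← Real.exp_sum]
    have hq : 0 ≤ p ^ A.card * (1 - p) ^ (E.card - A.card) :=
      mul_nonneg (pow_nonneg hp0.le _) (pow_nonneg (by linarith) _)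
    have he : Real.exp t * (p ^ A.card * Real.exp (∑ i ∈ A, -(t * (w i / C))) *
        (1 - p) ^ (E.card - A.card)) = (p ^ A.card * (1 - p) ^ (E.card - A.card)) *
        Real.exp (t + ∑ i ∈ A, -(t * (w i / C))) := by
      rw [Real.exp_add]; ring
    rw [he]
    split_ifs with h
    · refine le_mul_of_one_le_right hq (Real.one_le_exp ?_)
      rw [Finset.sum_neg_distrib, ← Finset.mul_sum, ← Finset.sum_div]
      have : (∑ i ∈ A, w i) / C ≤ 1 := by rw [div_le_one hC]; exact h.le
      nlinarith
    · exact mul_nonneg hq (Real.exp_pos _).le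
  refine h1.trans ?_
  rw [← Finset.mul_sum, ← Finset.prod_add]
  have h2 : ∏ i ∈ E, (p * Real.exp (-(t * (w i / C))) + (1 - p)) ≤
      ∏ i ∈ E, Real.exp ((-t + t ^ 2 / 2) * (p * w i / C)) := by
    refine Finset.prod_le_prod (fun i _ => ?_) (fun i hi => ?_)
    · have := mul_nonneg hp0.le (Real.exp_pos (-(t * (w i / C)))).le
      linarith
    · obtain ⟨ha, hb⟩ := hw i hi
      rw [mul_div_assoc]
      have hx0 : 0 ≤ w i / C := div_nonneg ha hC.le
      have hx1 : w i / C ≤ 1 := (div_le_one hC).2 hb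
      generalize w i / C = x at *
      have h3 := exp_neg_le_quad (t * x) (mul_nonneg ht0 hx0)
      have h5 : (t * x) ^ 2 ≤ t ^ 2 * x := by
        nlinarith [mul_nonneg (sq_nonneg t) (mul_nonneg hx0 (sub_nonneg.2 hx1))]
      have h6 := Real.add_one_le_exp ((-t + t ^ 2 / 2) * (p * x))
      have h7 : p * Real.exp (-(t * x)) ≤ p * (1 - t * x + t ^ 2 * x / 2) :=
        mul_le_mul_of_nonneg_left (by linarith) hp0.le
      nlinarith
  refine (mul_le_mul_of_nonneg_left h2 (Real.exp_pos t).le).trans ?_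
  rw [← Real.exp_sum, ← Finset.mul_sum, ← Finset.sum_div, ← Finset.mul_sum, ← hμdef,
    ← Real.exp_add]
  apply le_of_eq
  congr 1
  rw [ht]
  field_simp
  ring
end

section
/- Let E be a finite set with a weight function w : E → ℝ satisfying w e > 0 for all e ∈ E. Let B ⊆ E satisfy w b ≤ w e for every b ∈ B and every e ∈ E \ B, and let A ⊆ E and C ∈ ℝ satisfy ∑_{a∈A} w a ≤ C ≤ ∑_{b∈B} w b. Then there exists an injective map φ : A → B such that w(φ(a)) ≤ w(a) for every a ∈ A. -/
open Finset

/-- If `B` consists of the lightest items of `E` and `∑_A w ≤ C ≤ ∑_B w`, then there is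
an injective map `φ : A → B` with `w (φ a) ≤ w a` for all `a ∈ A`. -/
theorem exists_injective_lighter_substitution {ι : Type*} [DecidableEq ι]
    (E : Finset ι) (w : ι → ℝ) (hw : ∀ e ∈ E, 0 < w e)
    (B : Finset ι) (hB : B ⊆ E)
    (hBlight : ∀ b ∈ B, ∀ e ∈ E \ B, w b ≤ w e)
    (A : Finset ι) (hA : A ⊆ E) (C : ℝ)
    (hAC : (∑ a ∈ A, w a) ≤ C) (hCB : C ≤ ∑ b ∈ B, w b) :
    ∃ φ : ι → ι, Set.InjOn φ ↑A ∧ (∀ a ∈ A, φ a ∈ B) ∧ ∀ a ∈ A, w (φ a) ≤ w a := by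
  have hsum : ∑ a ∈ A \ B, w a ≤ ∑ b ∈ B \ A, w b := by
    have h1 := Finset.sum_inter_add_sum_sdiff A B w
    have h2 := Finset.sum_inter_add_sum_sdiff B A w
    rw [Finset.inter_comm B A] at h2
    linarith
  have hcard : (A \ B).card ≤ (B \ A).card := by
    by_contra! hlt
    have hne : (A \ B).Nonempty := Finset.card_pos.mp (by omega)
    obtain ⟨x, hx, hmin⟩ := Finset.exists_min_image (A \ B) w hne
    have hxA := Finset.mem_sdiff.mp hx
    have hxpos := hw x (hA hxA.1)
    have h1 : (A \ B).card • w x ≤ ∑ a ∈ A \ B, w a :=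
      Finset.card_nsmul_le_sum _ _ _ hmin
    have h2 : ∑ b ∈ B \ A, w b ≤ (B \ A).card • w x :=
      Finset.sum_le_card_nsmul _ _ _ fun b hb =>
        hBlight b (Finset.mem_sdiff.mp hb).1 x (Finset.mem_sdiff.mpr ⟨hA hxA.1, hxA.2⟩)
    rw [nsmul_eq_mul] at h1 h2
    have h3 : ((B \ A).card : ℝ) < (A \ B).card := by exact_mod_cast hlt
    nlinarith [mul_lt_mul_of_pos_right h3 hxpos]
  obtain ⟨f⟩ : Nonempty (↥(A \ B) ↪ ↥(B \ A)) :=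
    Function.Embedding.nonempty_of_card_le (by simpa only [Fintype.card_coe] using hcard)
  have hf : ∀ y, (f y : ι) ∈ B ∧ (f y : ι) ∉ A := fun y => Finset.mem_sdiff.mp (f y).2
  refine ⟨fun a => if h : a ∈ A \ B then (f ⟨a, h⟩ : ι) else a, ?_, ?_, ?_⟩
  · intro a ha b hb hab
    have ha' : a ∈ A := ha
    have hb' : b ∈ A := hb
    dsimp only at hab
    split_ifs at hab with h1 h2 h2
    · exact congrArg Subtype.val (f.injective (Subtype.ext hab))
    · exact absurd (hab ▸ hb') (hf ⟨a, h1⟩).2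
    · exact absurd (hab ▸ ha') (hf ⟨b, h2⟩).2
    · exact hab
  · intro a ha
    dsimp only
    split_ifs with h
    · exact (hf _).1
    · by_contra hb
      exact h (Finset.mem_sdiff.mpr ⟨ha, hb⟩)
  · intro a ha
    dsimp only
    split_ifs with h
    · exact hBlight _ (hf _).1 a
        (Finset.mem_sdiff.mpr ⟨hA ha, (Finset.mem_sdiff.mp h).2⟩)
    · exact le_rfl
end

section
/- Let E be a finite set with functions w, v : E → ℝ, where w e > 0 for all e ∈ E, and suppose there are reals t and ε ≥ 0 with t < v e ≤ (1+ε)·t for every e ∈ E. Let B ⊆ E satisfy w b ≤ w e for every b ∈ B and every e ∈ E \ B, and let A ⊆ E and C ∈ ℝ satisfy ∑_{a∈A} w a ≤ C ≤ ∑_{b∈B} w b. Then there exists T ⊆ B with ∑_{i∈T} w i ≤ ∑_{a∈A} w a and (1+ε)·∑_{i∈T} v i ≥ ∑_{a∈A} v a. -/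
open Finset

theorem aux_sum_le {ι : Type*} (w : ι → ℝ) (X Y : Finset ι) (hc : X.card = Y.card)
    (h : ∀ x ∈ X, ∀ y ∈ Y, w x ≤ w y) : ∑ x ∈ X, w x ≤ ∑ y ∈ Y, w y := by
  rcases X.eq_empty_or_nonempty with rfl | hX
  · have : Y = ∅ := by
      rw [← Finset.card_eq_zero, ← hc]; rfl
    subst this; exact le_rfl
  · obtain ⟨m, hm, hmax⟩ := X.exists_max_image w hX
    have h1 := Finset.sum_le_card_nsmul X w (w m) hmax
    have h2 := Finset.card_nsmul_le_sum Y w (w m) (fun y hy => h m hm y hy)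
    rw [hc] at h1
    exact h1.trans h2

/-- If all values in `E` lie in the bucket `(t, (1+ε)·t]`, `B` consists of the lightest
items of `E`, and `∑_A w ≤ C ≤ ∑_B w`, then there is `T ⊆ B` with
`∑_T w ≤ ∑_A w` and `(1+ε)·∑_T v ≥ ∑_A v`. -/
theorem exists_bucket_substitute_set {ι : Type*} [DecidableEq ι]
    (E : Finset ι) (w v : ι → ℝ) (hw : ∀ e ∈ E, 0 < w e)
    (t ε : ℝ) (hε : 0 ≤ ε)
    (hv : ∀ e ∈ E, t < v e ∧ v e ≤ (1 + ε) * t)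
    (B : Finset ι) (hB : B ⊆ E)
    (hBlight : ∀ b ∈ B, ∀ e ∈ E \ B, w b ≤ w e)
    (A : Finset ι) (hA : A ⊆ E) (C : ℝ)
    (hAC : (∑ a ∈ A, w a) ≤ C) (hCB : C ≤ ∑ b ∈ B, w b) :
    ∃ T ⊆ B, (∑ i ∈ T, w i) ≤ (∑ a ∈ A, w a) ∧
      (∑ a ∈ A, v a) ≤ (1 + ε) * ∑ i ∈ T, v i := by
  have hl : ∀ X ⊆ B \ A, ∀ Y ⊆ A \ B, X.card = Y.card → ∑ x ∈ X, w x ≤ ∑ y ∈ Y, w y := by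
    intro X hX Y hY hc
    refine aux_sum_le w X Y hc (fun x hx y hy => ?_)
    have h1 := Finset.mem_sdiff.1 (hX hx)
    have h2 := Finset.mem_sdiff.1 (hY hy)
    exact hBlight x h1.1 y (Finset.mem_sdiff.2 ⟨hA h2.1, h2.2⟩)
  have eA : ∑ i ∈ A ∩ B, w i + ∑ i ∈ A \ B, w i = ∑ i ∈ A, w i :=
    Finset.sum_inter_add_sum_sdiff A B w
  have eB : ∑ i ∈ B ∩ A, w i + ∑ i ∈ B \ A, w i = ∑ i ∈ B, w i :=
    Finset.sum_inter_add_sum_sdiff B A w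
  rw [Finset.inter_comm] at eB
  have hcard : (A \ B).card ≤ (B \ A).card := by
    by_contra hlt
    push Not at hlt
    obtain ⟨Y, hY, hYc⟩ := Finset.exists_subset_card_eq hlt.le
    have h1 := hl _ subset_rfl Y hY hYc.symm
    obtain ⟨z, hz, hzY⟩ : ∃ z ∈ A \ B, z ∉ Y := Finset.exists_mem_notMem_of_card_lt_card (by omega)
    have h2 : ∑ y ∈ Y, w y < ∑ y ∈ A \ B, w y :=
      Finset.sum_lt_sum_of_subset hY hz hzY (hw z (hA (Finset.mem_sdiff.1 hz).1))
        (fun j hj _ => (hw j (hA (Finset.mem_sdiff.1 hj).1)).le)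
    linarith
  obtain ⟨S, hS, hSc⟩ := Finset.exists_subset_card_eq hcard
  have hd : Disjoint (A ∩ B) S := by
    rw [Finset.disjoint_left]
    intro x hx hxS
    exact (Finset.mem_sdiff.1 (hS hxS)).2 (Finset.mem_inter.1 hx).1
  have hTB : (A ∩ B) ∪ S ⊆ B :=
    Finset.union_subset Finset.inter_subset_right (hS.trans Finset.sdiff_subset)
  refine ⟨(A ∩ B) ∪ S, hTB, ?_, ?_⟩
  · rw [Finset.sum_union hd]
    have := hl S hS _ subset_rfl hSc
    linarith
  · have hc : ((A ∩ B) ∪ S).card = A.card := by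
      rw [Finset.card_union_of_disjoint hd, hSc]
      exact Finset.card_inter_add_card_sdiff A B
    have h1 := Finset.sum_le_card_nsmul A v ((1 + ε) * t) (fun a ha => (hv a (hA ha)).2)
    have h2 := Finset.card_nsmul_le_sum ((A ∩ B) ∪ S) v t (fun a ha => (hv a (hB (hTB ha))).1.le)
    rw [hc] at h2
    rw [nsmul_eq_mul] at h1 h2
    have h3 := mul_le_mul_of_nonneg_left h2 (by linarith : (0:ℝ) ≤ 1 + ε)
    linarith
end

section
/- Let a GAP instance be given and let A ⊆ E. Let σ be a feasible assignment on A whose value is maximum among all feasible assignments on A. Then for every item i ∈ A and every knapsack j with w_{ij} ≤ C_j, one has v_{ij} ≤ v_i^σ + v_j(σ), where v_i^σ := v_{i,σ(i)} if i belongs to the domain of σ and v_i^σ := 0 otherwise, and v_j(σ) := ∑_{i' ∈ dom σ, σ(i') = j} v_{i'j}. -/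
open Finset

/-- Total value of a partial assignment `σ` of items (within the ground set `E`)
to knapsacks: `v(σ) = ∑_{i ∈ dom σ} v_{i,σ(i)}`. -/
noncomputable def assignValue {ι : Type*} {m : ℕ} (E : Finset ι)
    (v : ι → Fin m → ℝ) (σ : ι → Option (Fin m)) : ℝ :=
  ∑ i ∈ E, (σ i).elim 0 (v i)

/-- Total weight placed by the partial assignment `σ` into knapsack `j`. -/
noncomputable def knapWeight {ι : Type*} [DecidableEq ι] {m : ℕ} (E : Finset ι)
    (w : ι → Fin m → ℝ) (σ : ι → Option (Fin m)) (j : Fin m) : ℝ :=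
  ∑ i ∈ E, if σ i = some j then w i j else 0

/-- For an optimal feasible assignment `σ` on `A`: for every item `i ∈ A` and knapsack `j`
with `w_{ij} ≤ C_j`, one has `v_{ij} ≤ v_i^σ + v_j(σ)`. -/
theorem optimal_assignment_value_bound {ι : Type*} [DecidableEq ι] {m : ℕ}
    (E : Finset ι) (C : Fin m → ℝ) (hC : ∀ j, 0 < C j)
    (v w : ι → Fin m → ℝ) (hv : ∀ i j, 0 ≤ v i j) (hw : ∀ i j, 0 ≤ w i j)
    (hsomewhere : ∀ i ∈ E, ∃ j, w i j ≤ C j)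
    (A : Finset ι) (hA : A ⊆ E)
    (σ : ι → Option (Fin m))
    (hdom : ∀ i, σ i ≠ none → i ∈ A)
    (hfeas : ∀ j, knapWeight E w σ j ≤ C j)
    (hopt : ∀ σ' : ι → Option (Fin m), (∀ i, σ' i ≠ none → i ∈ A) →
      (∀ j, knapWeight E w σ' j ≤ C j) → assignValue E v σ' ≤ assignValue E v σ)
    (i : ι) (hi : i ∈ A) (j : Fin m) (hij : w i j ≤ C j) :
    v i j ≤ (σ i).elim 0 (v i) + ∑ i' ∈ E, (if σ i' = some j then v i' j else 0) := by
  classical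
  have hiE := hA hi
  have h := hopt (fun k => if k = i then some j else if σ k = some j then none else σ k) ?_ ?_
  · unfold assignValue at h
    have key : ∑ k ∈ E, ((σ k).elim 0 (v k)) ≤ ∑ k ∈ E, (σ k).elim 0 (v k) +
        ((σ i).elim 0 (v i) + ∑ k ∈ E, (if σ k = some j then v k j else 0) - v i j) := by
      calc _ = _ := rfl
        _ ≤ ∑ k ∈ E, (((if k = i then some j else if σ k = some j then none else σ k).elim 0 (v k)
            + (if σ k = some j then v k j else 0))
            + (if k = i then ((σ i).elim 0 (v i) - v i j) else 0)) := by
            apply Finset.sum_le_sum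
            intro k _
            by_cases hk : k = i
            · subst hk
              have := hv k j
              by_cases hs : σ k = some j <;> simp [hs, this]
            · by_cases hs : σ k = some j <;> simp [hk, hs]
        _ ≤ _ := by
            rw [Finset.sum_add_distrib, Finset.sum_add_distrib, Finset.sum_ite_eq' E i, if_pos hiE]
            linarith
    linarith
  · intro k hk
    by_cases hki : k = i
    · exact hki ▸ hi
    · apply hdom
      intro h0
      simp [hki, h0] at hk
  · intro l
    unfold knapWeight
    by_cases hl : l = j
    · subst hl
      refine le_trans (le_of_eq ?_) hij
      rw [Finset.sum_eq_single_of_mem i hiE]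
      · simp
      · intro k _ hk
        by_cases hs : σ k = some l <;> simp [hk, hs]
    · refine le_trans (Finset.sum_le_sum ?_) (hfeas l)
      intro k _
      have := hw k l
      by_cases hk : k = i
      · have hl' : ¬ j = l := fun h => hl h.symm
        simp only [hk, if_true, Option.some.injEq, hl', if_false]
        split_ifs
        · exact hw _ _
        · exact le_rfl
      · by_cases hs : σ k = some j
        · simp only [hk, hs, if_true, if_false]
          split_ifs <;> simp_all
        · simp [hk, hs]
end

section
/- For every knapsack instance, every ε ∈ (0,1/3), and every p ∈ (0,1], there exist a set Q ⊆ E and a real number d with 1 ≤ d ≤ 2·(K+1)·(τ(ε)/p + 1), where K := ⌈ln(1/(εp))/ln(1+ε)⌉, such that (1/d)·1_Q lies in the convex hull in ℝ^E of the indicator vectors {1_S : S ⊆ E feasible}, and E_R[max{∑_{i∈S} v_i : S ⊆ Q ∩ R feasible}] ≥ (1 − 4ε)·E_R[OPT(R)], where R is the p-sampled active set of E. -/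
open Finset

/-- Expectation of `f` over the random active set `R ⊆ E` obtained by `p`-sampling. -/
noncomputable def sampleExp {ι : Type*} [DecidableEq ι] (E : Finset ι) (p : ℝ)
    (f : Finset ι → ℝ) : ℝ :=
  ∑ A ∈ E.powerset, p ^ A.card * (1 - p) ^ (E.card - A.card) * f A

/-- Optimal knapsack value using only items of `A`:
`OPT(A) = max{∑_{i∈S} vᵢ : S ⊆ A, ∑_{i∈S} wᵢ ≤ C}`. -/
noncomputable def knapOPT {ι : Type*} (C : ℝ) (w v : ι → ℝ) (A : Finset ι) : ℝ :=
  sSup {x : ℝ | ∃ S : Finset ι, S ⊆ A ∧ (∑ i ∈ S, w i) ≤ C ∧ x = ∑ i ∈ S, v i}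

section aux
variable {ι : Type*} [DecidableEq ι]

lemma sampleExp_empty (p : ℝ) (f : Finset ι → ℝ) : sampleExp ∅ p f = f ∅ := by
  simp [sampleExp]

lemma sampleExp_insert {a : ι} {E : Finset ι} (ha : a ∉ E) (p : ℝ) (f : Finset ι → ℝ) :
    sampleExp (insert a E) p f
      = p * sampleExp E p (fun A => f (insert a A)) + (1 - p) * sampleExp E p f := by
  unfold sampleExp
  rw [Finset.sum_powerset_insert ha, add_comm, Finset.mul_sum, Finset.mul_sum]
  congr 1
  · apply Finset.sum_congr rfl
    intro A hA
    rw [Finset.mem_powerset] at hA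
    have h1 : a ∉ A := fun h => ha (hA h)
    rw [Finset.card_insert_of_notMem ha, Finset.card_insert_of_notMem h1, Nat.add_sub_add_right]
    ring
  · apply Finset.sum_congr rfl
    intro A hA
    rw [Finset.mem_powerset] at hA
    have h2 := Finset.card_le_card hA
    rw [Finset.card_insert_of_notMem ha, Nat.sub_add_comm h2]
    ring

lemma sampleExp_mono {E : Finset ι} {p : ℝ} (hp0 : 0 ≤ p) (hp1 : p ≤ 1) {f g : Finset ι → ℝ}
    (h : ∀ A ⊆ E, f A ≤ g A) : sampleExp E p f ≤ sampleExp E p g := by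
  unfold sampleExp
  apply Finset.sum_le_sum
  intro A hA
  have : 0 ≤ 1 - p := by linarith
  exact mul_le_mul_of_nonneg_left (h A (Finset.mem_powerset.1 hA)) (by positivity)

lemma sampleExp_congr {E : Finset ι} {p : ℝ} {f g : Finset ι → ℝ}
    (h : ∀ A ⊆ E, f A = g A) : sampleExp E p f = sampleExp E p g := by
  unfold sampleExp
  apply Finset.sum_congr rfl
  intro A hA
  rw [h A (Finset.mem_powerset.1 hA)]

lemma sampleExp_const (E : Finset ι) (p c : ℝ) : sampleExp E p (fun _ => c) = c := by
  induction E using Finset.induction_on with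
  | empty => rw [sampleExp_empty]
  | insert a E ha ih => rw [sampleExp_insert ha, ih]; ring

lemma sampleExp_add (E : Finset ι) (p : ℝ) (f g : Finset ι → ℝ) :
    sampleExp E p (fun A => f A + g A) = sampleExp E p f + sampleExp E p g := by
  unfold sampleExp
  rw [← Finset.sum_add_distrib]
  exact Finset.sum_congr rfl fun _ _ => by ring

lemma sampleExp_mul (E : Finset ι) (p c : ℝ) (f : Finset ι → ℝ) :
    sampleExp E p (fun A => c * f A) = c * sampleExp E p f := by
  unfold sampleExp
  rw [Finset.mul_sum]
  exact Finset.sum_congr rfl fun _ _ => by ring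

lemma sampleExp_sum {κ : Type*} (s : Finset κ) (E : Finset ι) (p : ℝ) (f : κ → Finset ι → ℝ) :
    sampleExp E p (fun A => ∑ k ∈ s, f k A) = ∑ k ∈ s, sampleExp E p (f k) := by
  unfold sampleExp
  rw [Finset.sum_comm]
  exact Finset.sum_congr rfl fun _ _ => by rw [Finset.mul_sum]

lemma sampleExp_nonneg {E : Finset ι} {p : ℝ} (hp0 : 0 ≤ p) (hp1 : p ≤ 1) {f : Finset ι → ℝ}
    (h : ∀ A ⊆ E, 0 ≤ f A) : 0 ≤ sampleExp E p f := by
  have := sampleExp_mono (g := f) hp0 hp1 h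
  rwa [sampleExp_const] at this

/-- Harris inequality. -/
lemma harris {p : ℝ} (hp0 : 0 ≤ p) (hp1 : p ≤ 1) (E : Finset ι) : ∀ (f g : Finset ι → ℝ),
    (∀ A B, A ⊆ B → B ⊆ E → f A ≤ f B) → (∀ A B, A ⊆ B → B ⊆ E → g A ≤ g B) →
    sampleExp E p f * sampleExp E p g ≤ sampleExp E p (fun A => f A * g A) := by
  induction E using Finset.induction_on with
  | empty => intro f g _ _; simp [sampleExp_empty]
  | insert a E ha ih =>
    intro f g hf hg
    rw [sampleExp_insert ha, sampleExp_insert ha, sampleExp_insert ha]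
    have hsub := Finset.subset_insert a E
    have h0 := ih f g (fun A B h h' => hf A B h (h'.trans hsub))
      (fun A B h h' => hg A B h (h'.trans hsub))
    have h1 := ih (fun A => f (insert a A)) (fun A => g (insert a A))
      (fun A B h h' => hf _ _ (Finset.insert_subset_insert a h) (Finset.insert_subset_insert a h'))
      (fun A B h h' => hg _ _ (Finset.insert_subset_insert a h) (Finset.insert_subset_insert a h'))
    have hf' : sampleExp E p f ≤ sampleExp E p (fun A => f (insert a A)) :=
      sampleExp_mono hp0 hp1 fun A hA =>
        hf _ _ (Finset.subset_insert a A) (Finset.insert_subset_insert a hA)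
    have hg' : sampleExp E p g ≤ sampleExp E p (fun A => g (insert a A)) :=
      sampleExp_mono hp0 hp1 fun A hA =>
        hg _ _ (Finset.subset_insert a A) (Finset.insert_subset_insert a hA)
    have hq : 0 ≤ 1 - p := by linarith
    have e0 := mul_le_mul_of_nonneg_left h0 hq
    have e1 := mul_le_mul_of_nonneg_left h1 hp0
    have e2 := mul_nonneg (mul_nonneg hp0 hq) (mul_nonneg (sub_nonneg.2 hf') (sub_nonneg.2 hg'))
    nlinarith

/-- Product form of the weights. -/
lemma sampleExp_eq_prod (E : Finset ι) (p : ℝ) (f : Finset ι → ℝ) :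
    sampleExp E p f = ∑ A ∈ E.powerset, (∏ i ∈ E, if i ∈ A then p else 1 - p) * f A := by
  unfold sampleExp
  apply Finset.sum_congr rfl
  intro A hA
  rw [Finset.mem_powerset] at hA
  congr 1
  rw [Finset.prod_ite, Finset.prod_const, Finset.prod_const]
  have h1 : E.filter (fun i => i ∈ A) = A := by
    ext i; simp only [Finset.mem_filter]; exact ⟨fun h => h.2, fun h => ⟨hA h, h⟩⟩
  have h2 : E.filter (fun i => i ∉ A) = E \ A := by
    ext i; simp
  rw [h1, h2, Finset.card_sdiff_of_subset hA]

open Classical in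
/-- Swap coordinates of those classes in which `x` succeeds. -/
lemma swap_lemma (E : Finset ι) (p : ℝ) (c : ι → ℕ) (G : ℕ → Finset ι → Prop)
    (hG : ∀ k A B, A.filter (fun i => c i = k) = B.filter (fun i => c i = k) → (G k A ↔ G k B))
    (Good : Finset ι → Prop) (hGood : ∀ A, Good A ↔ ∀ k, G k A) (f : Finset ι → ℝ) :
    sampleExp E p (fun x => sampleExp E p (fun y => if Good y then
        f (x.filter (fun i => G (c i) x)) else 0))
    = sampleExp E p (fun x => sampleExp E p (fun y => if Good y then
        f (y.filter (fun i => G (c i) x)) else 0)) := by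
  simp only [sampleExp_eq_prod, Finset.mul_sum]
  rw [← Finset.sum_product', ← Finset.sum_product']
  set X : Finset ι × Finset ι → Finset ι := fun z =>
    E.filter (fun i => if G (c i) z.1 then i ∈ z.2 else i ∈ z.1) with hX
  set Y : Finset ι × Finset ι → Finset ι := fun z =>
    E.filter (fun i => if G (c i) z.1 then i ∈ z.1 else i ∈ z.2) with hY
  rw [← Finset.sum_filter_add_sum_filter_not _ (fun z : Finset ι × Finset ι => Good z.2)]
  rw [← Finset.sum_filter_add_sum_filter_not (E.powerset ×ˢ E.powerset)
    (fun z : Finset ι × Finset ι => Good z.2)]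
  have hz : ∀ F : Finset ι × Finset ι → ℝ,
    (∑ z ∈ (E.powerset ×ˢ E.powerset) with ¬ Good z.2,
      (∏ i ∈ E, if i ∈ z.1 then p else 1 - p) * ((∏ i ∈ E, if i ∈ z.2 then p else 1 - p) *
        if Good z.2 then F z else 0)) = 0 := by
    intro F
    apply Finset.sum_eq_zero
    intro z hz
    rw [if_neg (Finset.mem_filter.1 hz).2]; simp
  rw [hz, hz (fun z => f (z.2.filter (fun i => G (c i) z.1)))]
  congr 1
  have key : ∀ z ∈ (E.powerset ×ˢ E.powerset).filter (fun z => Good z.2),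
      z.1 ⊆ E ∧ z.2 ⊆ E ∧ Good z.2 ∧ (∀ k, G k (X z) ↔ G k z.1) ∧ Good (Y z) := by
    intro z hz
    simp only [Finset.mem_filter, Finset.mem_product, Finset.mem_powerset] at hz
    obtain ⟨⟨h1, h2⟩, h3⟩ := hz
    have h3' := (hGood _).1 h3
    refine ⟨h1, h2, h3, ?_, ?_⟩
    · intro k
      by_cases hk : G k z.1
      · have : G k (X z) ↔ G k z.2 := by
          apply hG
          ext i
          simp only [hX, Finset.mem_filter]
          constructor
          · rintro ⟨⟨_, h⟩, rfl⟩
            rw [if_pos hk] at h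
            exact ⟨h, rfl⟩
          · rintro ⟨h, rfl⟩
            rw [if_pos hk]
            exact ⟨⟨h2 h, h⟩, rfl⟩
        rw [this]
        exact ⟨fun _ => hk, fun _ => h3' k⟩
      · apply hG
        ext i
        simp only [hX, Finset.mem_filter]
        constructor
        · rintro ⟨⟨_, h⟩, rfl⟩
          rw [if_neg hk] at h
          exact ⟨h, rfl⟩
        · rintro ⟨h, rfl⟩
          rw [if_neg hk]
          exact ⟨⟨h1 h, h⟩, rfl⟩
    · rw [hGood]
      intro k
      by_cases hk : G k z.1
      · have : G k (Y z) ↔ G k z.1 := by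
          apply hG
          ext i
          simp only [hY, Finset.mem_filter]
          constructor
          · rintro ⟨⟨_, h⟩, rfl⟩
            rw [if_pos hk] at h
            exact ⟨h, rfl⟩
          · rintro ⟨h, rfl⟩
            rw [if_pos hk]
            exact ⟨⟨h1 h, h⟩, rfl⟩
        rw [this]; exact hk
      · have : G k (Y z) ↔ G k z.2 := by
          apply hG
          ext i
          simp only [hY, Finset.mem_filter]
          constructor
          · rintro ⟨⟨_, h⟩, rfl⟩
            rw [if_neg hk] at h
            exact ⟨h, rfl⟩
          · rintro ⟨h, rfl⟩
            rw [if_neg hk]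
            exact ⟨⟨h2 h, h⟩, rfl⟩
        rw [this]; exact h3' k
  have hmem : ∀ z ∈ (E.powerset ×ˢ E.powerset).filter (fun z => Good z.2),
      (X z, Y z) ∈ (E.powerset ×ˢ E.powerset).filter (fun z => Good z.2) := by
    intro z hz
    simp only [Finset.mem_filter, Finset.mem_product, Finset.mem_powerset]
    exact ⟨⟨Finset.filter_subset _ _, Finset.filter_subset _ _⟩, (key z hz).2.2.2.2⟩
  have hinv : ∀ z ∈ (E.powerset ×ˢ E.powerset).filter (fun z => Good z.2),
      (X (X z, Y z), Y (X z, Y z)) = z := by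
    intro z hz
    obtain ⟨h1, h2, -, hk, -⟩ := key z hz
    apply Prod.ext
    · ext i
      simp only [hX, hY, Finset.mem_filter] at hk ⊢
      simp only [hk]
      have := @h1 i
      by_cases hg : G (c i) z.1 <;> simp [hg] <;> tauto
    · ext i
      simp only [hX, hY, Finset.mem_filter] at hk ⊢
      simp only [hk]
      have := @h2 i
      by_cases hg : G (c i) z.1 <;> simp [hg] <;> tauto
  refine Finset.sum_nbij' (fun z => (X z, Y z)) (fun z => (X z, Y z)) hmem hmem hinv hinv ?_
  intro z hz
  obtain ⟨h1, h2, h3, hk, h4⟩ := key z hz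
  dsimp only
  rw [if_pos h3, if_pos h4, ← mul_assoc, ← mul_assoc, ← Finset.prod_mul_distrib,
    ← Finset.prod_mul_distrib]
  congr 1
  · apply Finset.prod_congr rfl
    intro i hi
    simp only [hX, hY, Finset.mem_filter, hi, true_and]
    by_cases hg : G (c i) z.1 <;> simp [hg, mul_comm]
  · congr 1
    ext i
    simp only [Finset.mem_filter, hk]
    simp only [hY, Finset.mem_filter]
    constructor
    · rintro ⟨h, hg⟩
      exact ⟨⟨h1 h, by rw [if_pos hg]; exact h⟩, hg⟩
    · rintro ⟨⟨_, h⟩, hg⟩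
      rw [if_pos hg] at h
      exact ⟨h, hg⟩

open Classical in
lemma mask_lemma (E : Finset ι) {p : ℝ} (hp0 : 0 < p) (hp1 : p ≤ 1) {ε : ℝ} (hε : ε < 1)
    (c : ι → ℕ) (n : ℕ) (G : ℕ → Finset ι → Prop)
    (hG : ∀ k A B, A.filter (fun i => c i = k) = B.filter (fun i => c i = k) → (G k A ↔ G k B))
    (hGmono : ∀ k A B, A ⊆ B → G k A → G k B) (hGE : ∀ k, G k E)
    (hpr : ∀ k, 1 - ε ≤ sampleExp E p (fun A => if G k A then 1 else 0))
    (f : Finset ι → ℝ) (_hf0 : ∀ A ⊆ E, 0 ≤ f A)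
    (hfmono : ∀ A B, A ⊆ B → B ⊆ E → f A ≤ f B)
    (hxos : ∀ y ⊆ E, ∃ a : ℕ → ℝ, (∀ k, 0 ≤ a k) ∧ f y = ∑ k ∈ range n, a k ∧
      ∀ J : ℕ → Prop, ∑ k ∈ range n, (if J k then a k else 0) ≤ f (y.filter (fun i => J (c i)))) :
    (1 - ε) * sampleExp E p f ≤ sampleExp E p (fun A => f (A.filter (fun i => G (c i) A))) := by
  set Good : Finset ι → Prop := fun A => ∀ k, G k A with hGood
  set g : Finset ι → ℝ := fun A => if Good A then 1 else 0 with hg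
  have hgE : g E = 1 := if_pos hGE
  have hgpos : 0 < sampleExp E p g := by
    unfold sampleExp
    apply Finset.sum_pos'
    · intro A hA
      have : 0 ≤ 1 - p := by linarith
      have : 0 ≤ g A := by simp only [hg]; split_ifs <;> norm_num
      positivity
    · refine ⟨E, by simp, ?_⟩
      rw [hgE]; simp; positivity
  have hgm : ∀ A B, A ⊆ B → B ⊆ E → g A ≤ g B := by
    intro A B hAB _
    simp only [hg]
    by_cases h : Good A
    · have : Good B := fun k => hGmono k A B hAB (h k)
      simp [h, this]
    · rw [if_neg h]; split_ifs <;> norm_num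
  have hh := harris hp0.le hp1 E f g hfmono hgm
  have hsw := swap_lemma E p c G hG Good (fun _ => Iff.rfl) f
  have hL : sampleExp E p (fun x => sampleExp E p (fun y => if Good y then
        f (x.filter (fun i => G (c i) x)) else 0)) =
      sampleExp E p g * sampleExp E p (fun A => f (A.filter (fun i => G (c i) A))) := by
    rw [← sampleExp_mul]
    apply sampleExp_congr
    intro x _
    rw [mul_comm, ← sampleExp_mul]
    apply sampleExp_congr
    intro y _
    simp only [hg]; split_ifs <;> simp
  have hcomm : ∀ F : Finset ι → Finset ι → ℝ, sampleExp E p (fun x => sampleExp E p (fun y => F x y))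
      = sampleExp E p (fun y => sampleExp E p (fun x => F x y)) := by
    intro F
    simp only [sampleExp, Finset.mul_sum]
    rw [Finset.sum_comm]
    exact Finset.sum_congr rfl fun _ _ => Finset.sum_congr rfl fun _ _ => by ring
  have hR : (1 - ε) * sampleExp E p (fun A => f A * g A) ≤
      sampleExp E p (fun x => sampleExp E p (fun y => if Good y then
        f (y.filter (fun i => G (c i) x)) else 0)) := by
    rw [hcomm, ← sampleExp_mul]
    apply sampleExp_mono hp0.le hp1
    intro y hy
    by_cases hgy : Good y
    · simp only [hg, if_pos hgy, mul_one]
      obtain ⟨a, ha0, hay, haJ⟩ := hxos y hy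
      calc (1 - ε) * f y = ∑ k ∈ range n, a k * (1 - ε) := by
            rw [hay, Finset.mul_sum]; exact Finset.sum_congr rfl fun _ _ => mul_comm _ _
        _ ≤ ∑ k ∈ range n, a k * sampleExp E p (fun A => if G k A then 1 else 0) :=
            Finset.sum_le_sum fun k _ => mul_le_mul_of_nonneg_left (hpr k) (ha0 k)
        _ = sampleExp E p (fun A => ∑ k ∈ range n, if G k A then a k else 0) := by
            rw [sampleExp_sum]
            apply Finset.sum_congr rfl
            intro k _
            rw [← sampleExp_mul]
            apply sampleExp_congr
            intro A _
            split_ifs <;> simp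
        _ ≤ _ := sampleExp_mono hp0.le hp1 fun A _ => haJ (fun k => G k A)
    · simp [hg, hgy, sampleExp_const]
  rw [← hsw, hL] at hR
  have h1 := mul_le_mul_of_nonneg_left hh (by linarith : (0:ℝ) ≤ 1 - ε)
  refine le_of_mul_le_mul_left ?_ hgpos
  nlinarith

lemma tau_ge (ε : ℝ) (h0 : 0 < ε) (h1 : ε < 1) :
    1 ≤ tau ε ∧ Real.exp (Real.log (tau ε)) * Real.exp (- (tau ε - 1)) ≤ ε := by
  have hL : 0 < Real.log (1 / ε) := Real.log_pos (by rw [lt_div_iff₀ h0]; linarith)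
  set L := Real.log (1 / ε) with hLdef
  set s := Real.sqrt (L ^ 2 + 2 * L) with hs
  have hs0 : 0 ≤ s := Real.sqrt_nonneg _
  have hs2 : s ^ 2 = L ^ 2 + 2 * L := Real.sq_sqrt (by positivity)
  have ht : tau ε = 1 + L + s := rfl
  have ht1 : 1 ≤ tau ε := by rw [ht]; linarith
  refine ⟨ht1, ?_⟩
  have htp : 0 < tau ε := by linarith
  have hlog : Real.log (tau ε) ≤ (tau ε - (tau ε)⁻¹) / 2 := by
    rw [← Real.sinh_log htp]
    exact Real.self_le_sinh_iff.2 (Real.log_nonneg ht1)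
  have hinv : (tau ε)⁻¹ = 1 + L - s := by
    rw [ht]
    apply inv_eq_of_mul_eq_one_right
    nlinarith
  rw [← Real.exp_add]
  calc Real.exp (Real.log (tau ε) + -(tau ε - 1)) ≤ Real.exp (-L) := by
        apply Real.exp_le_exp.2
        rw [hinv] at hlog
        rw [ht] at hlog ⊢
        linarith
    _ = ε := by
        rw [hLdef, one_div, Real.log_inv, neg_neg, Real.exp_log h0]

lemma mgf_bound (E : Finset ι) {p : ℝ} (hp0 : 0 ≤ p) (hp1 : p ≤ 1) (lam : ℝ) (x : ι → ℝ) :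
    ∀ Q : Finset ι, Q ⊆ E → (∀ i ∈ Q, 0 ≤ x i ∧ x i ≤ 1) →
    sampleExp E p (fun A => Real.exp (- lam * ∑ i ∈ A ∩ Q, x i)) ≤
      Real.exp (- (p * (1 - Real.exp (-lam)) * ∑ i ∈ Q, x i)) := by
  induction E using Finset.induction_on with
  | empty =>
    intro Q hQ _
    have : Q = ∅ := Finset.subset_empty.1 hQ
    subst this
    simp [sampleExp_empty]
  | insert a E ha ih =>
    intro Q hQ hx
    rw [sampleExp_insert ha]
    have hsub : Q.erase a ⊆ E := by
      intro i hi
      have h1 := Finset.mem_erase.1 hi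
      exact (Finset.mem_insert.1 (hQ h1.2)).resolve_left h1.1
    have h := ih (Q.erase a) hsub (fun i hi => hx i (Finset.mem_of_mem_erase hi))
    have hE : ∀ A ⊆ E, A ∩ Q = A ∩ Q.erase a := by
      intro A hA
      ext i
      simp only [Finset.mem_inter, Finset.mem_erase]
      constructor
      · rintro ⟨h1, h2⟩
        exact ⟨h1, fun h => ha (h ▸ hA h1), h2⟩
      · rintro ⟨h1, _, h2⟩; exact ⟨h1, h2⟩
    by_cases haQ : a ∈ Q
    · have e1 : sampleExp E p (fun A => Real.exp (- lam * ∑ i ∈ (insert a A) ∩ Q, x i)) =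
          Real.exp (- lam * x a) *
            sampleExp E p (fun A => Real.exp (- lam * ∑ i ∈ A ∩ Q.erase a, x i)) := by
        rw [← sampleExp_mul]
        apply sampleExp_congr
        intro A hA
        rw [Finset.insert_inter_of_mem haQ, hE A hA, Finset.sum_insert, mul_add, Real.exp_add]
        simp
      have e2 : sampleExp E p (fun A => Real.exp (- lam * ∑ i ∈ A ∩ Q, x i)) =
            sampleExp E p (fun A => Real.exp (- lam * ∑ i ∈ A ∩ Q.erase a, x i)) := by
        apply sampleExp_congr
        intro A hA
        rw [hE A hA]
      rw [e1, e2, ← Finset.add_sum_erase Q x haQ]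
      set M := sampleExp E p (fun A => Real.exp (- lam * ∑ i ∈ A ∩ Q.erase a, x i))
      obtain ⟨hx0, hx1⟩ := hx a haQ
      have hconv : Real.exp (- lam * x a) ≤ 1 - x a * (1 - Real.exp (-lam)) := by
        have := convexOn_exp.2 (Set.mem_univ (0:ℝ)) (Set.mem_univ (-lam))
          (by linarith : 0 ≤ 1 - x a) hx0 (by ring)
        simp only [smul_eq_mul, mul_zero, zero_add, Real.exp_zero, mul_one] at this
        rw [mul_comm (-lam)]
        linarith
      have hfac : p * Real.exp (- lam * x a) + (1 - p) ≤
          Real.exp (- (p * (1 - Real.exp (-lam)) * x a)) := by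
        have := Real.add_one_le_exp (- (p * (1 - Real.exp (-lam)) * x a))
        nlinarith
      have hM : 0 ≤ M := sampleExp_nonneg hp0 hp1 fun A _ => (Real.exp_pos _).le
      calc p * (Real.exp (- lam * x a) * M) + (1 - p) * M
          = (p * Real.exp (- lam * x a) + (1 - p)) * M := by ring
        _ ≤ Real.exp (- (p * (1 - Real.exp (-lam)) * x a)) *
            Real.exp (- (p * (1 - Real.exp (-lam)) * ∑ i ∈ Q.erase a, x i)) :=
            mul_le_mul hfac h hM (Real.exp_pos _).le
        _ = _ := by rw [← Real.exp_add]; congr 1; ring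
    · have e0 : Q.erase a = Q := Finset.erase_eq_of_notMem haQ
      rw [e0] at h
      simp only [Finset.insert_inter_of_notMem haQ]
      linarith

open Classical in
lemma chernoff (E : Finset ι) {p : ℝ} (hp0 : 0 < p) (hp1 : p ≤ 1) {ε : ℝ} (h0 : 0 < ε) (h1 : ε < 1)
    {C : ℝ} (hC : 0 < C) (w : ι → ℝ) (Q : Finset ι) (hQ : Q ⊆ E)
    (hw : ∀ i ∈ Q, 0 < w i ∧ w i ≤ C) (hWQ : tau ε / p * C ≤ ∑ i ∈ Q, w i) :
    1 - ε ≤ sampleExp E p (fun A => if C ≤ ∑ i ∈ A ∩ Q, w i then 1 else 0) := by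
  obtain ⟨ht1, hte⟩ := tau_ge ε h0 h1
  have htp : 0 < tau ε := by linarith
  set lam := Real.log (tau ε) with hlam
  have hlam0 : 0 ≤ lam := Real.log_nonneg ht1
  have hm := mgf_bound E hp0.le hp1 lam (fun i => w i / C) Q hQ
    (fun i hi => ⟨(div_pos (hw i hi).1 hC).le, (div_le_one hC).2 (hw i hi).2⟩)
  have hel : Real.exp (-lam) = (tau ε)⁻¹ := by rw [Real.exp_neg, hlam, Real.exp_log htp]
  have hsum : tau ε ≤ p * ∑ i ∈ Q, w i / C := by
    rw [← Finset.sum_div, ← mul_div_assoc, le_div_iff₀ hC]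
    calc tau ε * C = p * (tau ε / p * C) := by field_simp
      _ ≤ _ := mul_le_mul_of_nonneg_left hWQ hp0.le
  have hm2 : Real.exp (- (p * (1 - Real.exp (-lam)) * ∑ i ∈ Q, w i / C)) ≤
      Real.exp (-(tau ε - 1)) := by
    apply Real.exp_le_exp.2
    rw [hel]
    have h3 : 0 ≤ 1 - (tau ε)⁻¹ := by
      have := inv_le_one_of_one_le₀ ht1
      linarith
    have h4 := mul_le_mul_of_nonneg_left hsum h3
    have h5 : (1 - (tau ε)⁻¹) * tau ε = tau ε - 1 := by field_simp
    nlinarith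
  have hpt : sampleExp E p (fun A => 1 + (-Real.exp lam) *
        Real.exp (- lam * ∑ i ∈ A ∩ Q, w i / C)) ≤
      sampleExp E p (fun A => if C ≤ ∑ i ∈ A ∩ Q, w i then 1 else 0) := by
    apply sampleExp_mono hp0.le hp1
    intro A _
    split_ifs with hA
    · have := mul_pos (Real.exp_pos lam) (Real.exp_pos (- lam * ∑ i ∈ A ∩ Q, w i / C))
      linarith
    · push Not at hA
      have : 1 ≤ Real.exp lam * Real.exp (- lam * ∑ i ∈ A ∩ Q, w i / C) := by
        rw [← Real.exp_add]
        apply Real.one_le_exp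
        have : ∑ i ∈ A ∩ Q, w i / C ≤ 1 := by
          rw [← Finset.sum_div, div_le_one hC]; exact hA.le
        nlinarith
      linarith
  rw [sampleExp_add, sampleExp_const, sampleExp_mul] at hpt
  have := mul_le_mul_of_nonneg_left (hm.trans hm2) (Real.exp_pos lam).le
  linarith

lemma prefix_lemma (cls : Finset ι) (w key : ι → ℝ) {C t : ℝ} (ht : 0 ≤ t) (hC : 0 < C)
    (hw : ∀ i ∈ cls, 0 < w i ∧ w i ≤ C) :
    ∃ Q ⊆ cls, ∑ i ∈ Q, w i ≤ t + C ∧ (Q = cls ∨ t ≤ ∑ i ∈ Q, w i) ∧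
      ∀ a ∈ Q, ∀ b ∈ cls, b ∉ Q → key a ≤ key b := by
  classical
  let fam := cls.powerset.filter (fun Q => ∑ i ∈ Q, w i ≤ t + C ∧
    ∀ a ∈ Q, ∀ b ∈ cls, b ∉ Q → key a ≤ key b)
  have hne : fam.Nonempty := ⟨∅, by simp [fam]; linarith⟩
  obtain ⟨Q, hQ, hmax⟩ := Finset.exists_max_image fam Finset.card hne
  have hQ' := hQ
  simp only [fam, Finset.mem_filter, Finset.mem_powerset] at hQ'
  obtain ⟨hsub, hwt, hkey⟩ := hQ'
  refine ⟨Q, hsub, hwt, ?_, hkey⟩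
  by_contra hcon
  push Not at hcon
  obtain ⟨hneq, hlt⟩ := hcon
  have hdn : (cls \ Q).Nonempty := by
    rw [Finset.sdiff_nonempty]
    exact fun h => hneq (Finset.Subset.antisymm hsub h)
  obtain ⟨a, ha, hamin⟩ := Finset.exists_min_image (cls \ Q) key hdn
  rw [Finset.mem_sdiff] at ha
  have hmem : insert a Q ∈ fam := by
    simp only [fam, Finset.mem_filter, Finset.mem_powerset]
    refine ⟨Finset.insert_subset ha.1 hsub, ?_, ?_⟩
    · rw [Finset.sum_insert ha.2]
      linarith [(hw a ha.1).2]
    · intro x hx b hb hbn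
      rw [Finset.mem_insert, not_or] at hbn
      rcases Finset.mem_insert.1 hx with rfl | hx
      · exact hamin b (Finset.mem_sdiff.2 ⟨hb, hbn.2⟩)
      · exact hkey x hx b hb hbn.2
  have := hmax _ hmem
  rw [Finset.card_insert_of_notMem ha.2] at this
  omega

/-- Replacement in a class of nearly equal values. `B = R ∩ Q`. -/
lemma replace_large (B S : Finset ι) (w v : ι → ℝ) {C V ε : ℝ} (hε : 0 < ε) (hV : 0 < V)
    (hwS : ∀ i ∈ S, 0 < w i)
    (hvB : ∀ i ∈ B, V ≤ v i) (hvS : ∀ i ∈ S, V ≤ v i ∧ v i ≤ (1 + ε) * V)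
    (hkey : ∀ a ∈ B, ∀ b ∈ S, b ∉ B → w a ≤ w b)
    (hB : C ≤ ∑ i ∈ B, w i) (hS : ∑ i ∈ S, w i ≤ C) :
    ∃ T ⊆ B, ∑ i ∈ T, w i ≤ ∑ i ∈ S, w i ∧ (1 - ε) * ∑ i ∈ S, v i ≤ ∑ i ∈ T, v i := by
  have hcard : (S \ B).card ≤ (B \ S).card := by
    by_contra hlt
    push Not at hlt
    have hne : (S \ B).Nonempty := Finset.card_pos.1 (by omega)
    obtain ⟨b, hb, hbmin⟩ := Finset.exists_min_image (S \ B) w hne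
    have hb' := Finset.mem_sdiff.1 hb
    have h1 : ∑ i ∈ B \ S, w i ≤ (B \ S).card • w b :=
      Finset.sum_le_card_nsmul _ _ _ fun i hi =>
        hkey i (Finset.mem_sdiff.1 hi).1 b hb'.1 hb'.2
    have h2 : (S \ B).card • w b ≤ ∑ i ∈ S \ B, w i :=
      Finset.card_nsmul_le_sum _ _ _ fun i hi => hbmin i hi
    have h3 : ((B \ S).card : ℝ) + 1 ≤ (S \ B).card := by exact_mod_cast hlt
    have hwb := hwS b hb'.1
    rw [nsmul_eq_mul] at h1 h2
    have e1 := Finset.sum_inter_add_sum_sdiff B S w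
    have e2 := Finset.sum_inter_add_sum_sdiff S B w
    rw [Finset.inter_comm] at e2
    nlinarith
  obtain ⟨U, hU, hUc⟩ := Finset.exists_subset_card_eq hcard
  have hd : Disjoint (S ∩ B) U := by
    rw [Finset.disjoint_left]
    intro i hi hi'
    exact (Finset.mem_sdiff.1 (hU hi')).2 (Finset.mem_inter.1 hi).1
  have hle : ∑ i ∈ U, w i ≤ ∑ i ∈ S \ B, w i := by
    rcases (S \ B).eq_empty_or_nonempty with h | hne
    · have : U = ∅ := by rw [← Finset.card_eq_zero, hUc, h]; rfl
      rw [this, h]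
    · obtain ⟨b, hb, hbmin⟩ := Finset.exists_min_image (S \ B) w hne
      have hb' := Finset.mem_sdiff.1 hb
      have h1 : ∑ i ∈ U, w i ≤ U.card • w b :=
        Finset.sum_le_card_nsmul _ _ _ fun i hi =>
          hkey i (Finset.mem_sdiff.1 (hU hi)).1 b hb'.1 hb'.2
      have h2 : (S \ B).card • w b ≤ ∑ i ∈ S \ B, w i :=
        Finset.card_nsmul_le_sum _ _ _ fun i hi => hbmin i hi
      rw [hUc] at h1
      exact h1.trans h2
  refine ⟨S ∩ B ∪ U, ?_, ?_, ?_⟩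
  · exact Finset.union_subset Finset.inter_subset_right (hU.trans Finset.sdiff_subset)
  · rw [Finset.sum_union hd, ← Finset.sum_inter_add_sum_sdiff S B w]
    linarith
  · rw [Finset.sum_union hd, ← Finset.sum_inter_add_sum_sdiff S B v]
    have h1 : ∑ i ∈ S \ B, v i ≤ (S \ B).card • ((1 + ε) * V) :=
      Finset.sum_le_card_nsmul _ _ _ fun i hi => (hvS i (Finset.mem_sdiff.1 hi).1).2
    have h2 : U.card • V ≤ ∑ i ∈ U, v i :=
      Finset.card_nsmul_le_sum _ _ _ fun i hi => hvB i (Finset.mem_sdiff.1 (hU hi)).1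
    rw [hUc] at h2
    rw [nsmul_eq_mul] at h1 h2
    have h3 : 0 ≤ ∑ i ∈ S ∩ B, v i := Finset.sum_nonneg fun i hi =>
      hV.le.trans (hvS i (Finset.mem_inter.1 hi).1).1
    have h0 : 0 ≤ ∑ i ∈ S \ B, v i := Finset.sum_nonneg fun i hi =>
      hV.le.trans (hvS i (Finset.mem_sdiff.1 hi).1).1
    have hn : (0:ℝ) ≤ ((S \ B).card : ℝ) * V := by positivity
    by_cases h : ε ≤ 1
    · have h4 := mul_le_mul_of_nonneg_left h1 (by linarith : 0 ≤ 1 - ε)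
      nlinarith [mul_nonneg (mul_nonneg hε.le hε.le) hn, mul_nonneg hε.le h3]
    · push Not at h
      nlinarith

/-- Replacement in the class of small values. -/
lemma replace_small (B S : Finset ι) (w v : ι → ℝ) {C D : ℝ} (hD : 0 ≤ D)
    (hwB : ∀ i ∈ B, 0 < w i) (hwS : ∀ i ∈ S, 0 < w i)
    (hvB : ∀ i ∈ B, 0 ≤ v i ∧ v i ≤ D) (hvS : ∀ i ∈ S, 0 ≤ v i)
    (hkey : ∀ a ∈ B, ∀ b ∈ S, b ∉ B → v b / w b ≤ v a / w a)
    (hB : C ≤ ∑ i ∈ B, w i) (hS : ∑ i ∈ S, w i ≤ C) :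
    ∃ T ⊆ B, ∑ i ∈ T, w i ≤ ∑ i ∈ S, w i ∧ ∑ i ∈ S, v i - D ≤ ∑ i ∈ T, v i := by
  classical
  let fam := (B \ S).powerset.filter (fun U => ∑ i ∈ U, w i ≤ ∑ i ∈ S \ B, w i)
  have hne : fam.Nonempty := ⟨∅, by
    simp only [fam, Finset.mem_filter, Finset.empty_mem_powerset, true_and, Finset.sum_empty]
    exact Finset.sum_nonneg fun i hi => (hwS i (Finset.mem_sdiff.1 hi).1).le⟩
  obtain ⟨U, hU, hmax⟩ := Finset.exists_max_image fam Finset.card hne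
  simp only [fam, Finset.mem_filter, Finset.mem_powerset] at hU
  obtain ⟨hU, hUw⟩ := hU
  have hd : Disjoint (S ∩ B) U := by
    rw [Finset.disjoint_left]
    intro i hi hi'
    exact (Finset.mem_sdiff.1 (hU hi')).2 (Finset.mem_inter.1 hi).1
  -- density comparison
  have dens : ∀ U' ⊆ B \ S, ∑ i ∈ S \ B, w i ≤ ∑ i ∈ U', w i →
      ∑ i ∈ S \ B, v i ≤ ∑ i ∈ U', v i := by
    intro U' hU' hw'
    rcases (S \ B).eq_empty_or_nonempty with h | hne
    · rw [h, Finset.sum_empty]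
      exact Finset.sum_nonneg fun i hi => (hvB i (Finset.mem_sdiff.1 (hU' hi)).1).1
    · obtain ⟨b, hb, hbmax⟩ := Finset.exists_max_image (S \ B) (fun i => v i / w i) hne
      have hb' := Finset.mem_sdiff.1 hb
      have hr : 0 ≤ v b / w b := div_nonneg (hvS b hb'.1) (hwS b hb'.1).le
      calc ∑ i ∈ S \ B, v i ≤ ∑ i ∈ S \ B, v b / w b * w i := by
            apply Finset.sum_le_sum
            intro i hi
            exact (div_le_iff₀ (hwS i (Finset.mem_sdiff.1 hi).1)).1 (hbmax i hi)
        _ = v b / w b * ∑ i ∈ S \ B, w i := by rw [Finset.mul_sum]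
        _ ≤ v b / w b * ∑ i ∈ U', w i := mul_le_mul_of_nonneg_left hw' hr
        _ = ∑ i ∈ U', v b / w b * w i := by rw [Finset.mul_sum]
        _ ≤ ∑ i ∈ U', v i := by
            apply Finset.sum_le_sum
            intro i hi
            have hi' := (Finset.mem_sdiff.1 (hU' hi)).1
            exact (le_div_iff₀ (hwB i hi')).1 (hkey i hi' b hb'.1 hb'.2)
  have hval : ∑ i ∈ S \ B, v i - D ≤ ∑ i ∈ U, v i := by
    by_cases hfull : U = B \ S
    · have := dens U hU (by
        rw [hfull]
        have e1 := Finset.sum_inter_add_sum_sdiff B S w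
        have e2 := Finset.sum_inter_add_sum_sdiff S B w
        rw [Finset.inter_comm] at e2
        linarith)
      linarith
    · have hdn : ((B \ S) \ U).Nonempty := by
        rw [Finset.sdiff_nonempty]
        exact fun h => hfull (Finset.Subset.antisymm hU h)
      obtain ⟨a, ha⟩ := hdn
      rw [Finset.mem_sdiff] at ha
      have hsub : insert a U ⊆ B \ S := Finset.insert_subset ha.1 hU
      have hbig : ∑ i ∈ S \ B, w i ≤ ∑ i ∈ insert a U, w i := by
        by_contra hcon
        push Not at hcon
        have := hmax (insert a U) (by
          simp only [fam, Finset.mem_filter, Finset.mem_powerset]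
          exact ⟨hsub, hcon.le⟩)
        rw [Finset.card_insert_of_notMem ha.2] at this
        omega
      have := dens _ hsub hbig
      rw [Finset.sum_insert ha.2] at this
      linarith [(hvB a (Finset.mem_sdiff.1 ha.1).1).2]
  refine ⟨S ∩ B ∪ U, ?_, ?_, ?_⟩
  · exact Finset.union_subset Finset.inter_subset_right (hU.trans Finset.sdiff_subset)
  · rw [Finset.sum_union hd, ← Finset.sum_inter_add_sum_sdiff S B w]
    linarith
  · rw [Finset.sum_union hd, ← Finset.sum_inter_add_sum_sdiff S B v]
    linarith

lemma packing (w : ι → ℝ) {C : ℝ} (hC : 0 < C) (Q : Finset ι) (hw : ∀ i ∈ Q, 0 < w i ∧ w i ≤ C) :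
    ∃ (m : ℕ) (b : ι → ℕ), 1 ≤ m ∧ (∀ i ∈ Q, b i < m) ∧
      (∀ k, ∑ i ∈ Q with b i = k, w i ≤ C) ∧
      (∀ k l, k < m → l < m → k ≠ l →
        C < ∑ i ∈ Q with b i = k, w i + ∑ i ∈ Q with b i = l, w i) := by
  induction Q using Finset.induction_on with
  | empty =>
    refine ⟨1, fun _ => 0, le_rfl, by simp, by simp [hC.le], ?_⟩
    intro k l hk hl hkl; omega
  | insert a Q ha ih =>
    obtain ⟨m, b, hm, hb, hfeas, hpair⟩ := ih fun i hi => hw i (Finset.mem_insert_of_mem hi)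
    obtain ⟨hwa, hwa'⟩ := hw a (Finset.mem_insert_self _ _)
    have hsumk : ∀ k0 k, ∑ i ∈ insert a Q with Function.update b a k0 i = k, w i =
        (if k = k0 then w a else 0) + ∑ i ∈ Q with b i = k, w i := by
      intro k0 k
      have hQ : Q.filter (fun i => Function.update b a k0 i = k) = Q.filter (fun i => b i = k) := by
        apply Finset.filter_congr
        intro i hi
        have : i ≠ a := fun h => ha (h ▸ hi)
        rw [Function.update_of_ne this]
      rw [Finset.filter_insert, Function.update_self, hQ]
      by_cases h : k0 = k
      · rw [if_pos h, if_pos h.symm, Finset.sum_insert]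
        simp [ha]
      · rw [if_neg h, if_neg (Ne.symm h), zero_add]
    have hnn : ∀ k0 k : ℕ, 0 ≤ (if k = k0 then w a else 0) := by
      intro k0 k; split_ifs <;> linarith
    by_cases hfit : ∃ k0 < m, w a + ∑ i ∈ Q with b i = k0, w i ≤ C
    · obtain ⟨k0, hk0, hfit⟩ := hfit
      refine ⟨m, Function.update b a k0, hm, ?_, ?_, ?_⟩
      · intro i hi
        by_cases h : i = a
        · subst h; simpa using hk0
        · rw [Function.update_of_ne h]
          exact hb i ((Finset.mem_insert.1 hi).resolve_left h)
      · intro k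
        rw [hsumk]
        split_ifs with h
        · rw [h]; exact hfit
        · rw [zero_add]; exact hfeas k
      · intro k l hk hl hkl
        rw [hsumk, hsumk]
        linarith [hpair k l hk hl hkl, hnn k0 k, hnn k0 l]
    · push Not at hfit
      have hempty : ∑ i ∈ Q with b i = m, w i = 0 := by
        rw [Finset.filter_eq_empty_iff.2, Finset.sum_empty]
        intro i hi h
        have := hb i hi
        omega
      refine ⟨m + 1, Function.update b a m, by omega, ?_, ?_, ?_⟩
      · intro i hi
        by_cases h : i = a
        · subst h; simp
        · rw [Function.update_of_ne h]
          exact (hb i ((Finset.mem_insert.1 hi).resolve_left h)).trans (Nat.lt_succ_self m)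
      · intro k
        rw [hsumk]
        split_ifs with h
        · rw [h, hempty]; linarith
        · rw [zero_add]; exact hfeas k
      · intro k l hk hl hkl
        rw [hsumk, hsumk]
        by_cases h1 : k = m
        · have h2 : l < m := by omega
          rw [if_pos h1, if_neg (by omega), h1, hempty]
          linarith [hfit l h2]
        · by_cases h2 : l = m
          · rw [if_neg h1, if_pos h2, h2, hempty]
            linarith [hfit k (by omega)]
          · rw [if_neg h1, if_neg h2, zero_add, zero_add]
            exact hpair k l (by omega) (by omega) hkl

lemma degree_lemma (E : Finset ι) (w : ι → ℝ) {C : ℝ} (hC : 0 < C) (Q : Finset ι) (hQE : Q ⊆ E)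
    (hw : ∀ i ∈ Q, 0 < w i ∧ w i ≤ C) (T : ℝ) (hT : 1 ≤ 2 * T) (hW : ∑ i ∈ Q, w i ≤ T * C) :
    ∃ d : ℝ, 1 ≤ d ∧ d ≤ 2 * T ∧
      (fun i => (1 / d) * (if i ∈ Q then (1 : ℝ) else 0)) ∈
        convexHull ℝ {x : ι → ℝ | ∃ S : Finset ι, S ⊆ E ∧ (∑ i ∈ S, w i) ≤ C ∧
          x = fun i => if i ∈ S then (1 : ℝ) else 0} := by
  obtain ⟨m, b, hm, hb, hfeas, hpair⟩ := packing w hC Q hw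
  have hm' : (1:ℝ) ≤ m := by exact_mod_cast hm
  refine ⟨m, hm', ?_, ?_⟩
  · by_cases h1 : m = 1
    · rw [h1]; simpa using hT
    · have h2 : 2 ≤ m := by omega
      have htot : ∑ k ∈ range m, ∑ i ∈ Q with b i = k, w i = ∑ i ∈ Q, w i :=
        Finset.sum_fiberwise_of_maps_to (fun i hi => Finset.mem_range.2 (hb i hi)) w
      set W : ℕ → ℝ := fun k => ∑ i ∈ Q with b i = k, w i with hWdef
      have hds : ∑ k ∈ range m, ∑ l ∈ (range m).erase k, C ≤
          ∑ k ∈ range m, ∑ l ∈ (range m).erase k, (W k + W l) := by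
        apply Finset.sum_le_sum
        intro k hk
        apply Finset.sum_le_sum
        intro l hl
        rw [Finset.mem_erase] at hl
        exact (hpair k l (Finset.mem_range.1 hk) (Finset.mem_range.1 hl.2) hl.1.symm).le
      have hL : ∑ k ∈ range m, ∑ l ∈ (range m).erase k, C = m * ((m - 1) * C) := by
        rw [Finset.sum_congr rfl (g := fun _ => ((m:ℝ) - 1) * C)]
        · simp
        · intro k hk
          rw [Finset.sum_const, Finset.card_erase_of_mem hk, Finset.card_range, nsmul_eq_mul,
            Nat.cast_sub hm, Nat.cast_one]
      have hR : ∑ k ∈ range m, ∑ l ∈ (range m).erase k, (W k + W l) =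
          2 * (m - 1) * ∑ i ∈ Q, w i := by
        rw [Finset.sum_congr rfl (g := fun k => ((m:ℝ) - 2) * W k + ∑ i ∈ Q, w i)]
        · rw [Finset.sum_add_distrib, ← Finset.mul_sum, htot]
          simp; ring
        · intro k hk
          rw [Finset.sum_add_distrib, Finset.sum_const, Finset.card_erase_of_mem hk,
            Finset.card_range, nsmul_eq_mul, Nat.cast_sub hm, Nat.cast_one,
            Finset.sum_erase_eq_sub hk, htot]
          ring
      rw [hL, hR] at hds
      have h2' : (2:ℝ) ≤ m := by exact_mod_cast h2
      have hm1 : (0:ℝ) < m - 1 := by linarith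
      have h3 : (m:ℝ) * C ≤ 2 * ∑ i ∈ Q, w i := by
        refine le_of_mul_le_mul_left ?_ hm1
        linarith
      refine le_of_mul_le_mul_right ?_ hC
      linarith
  · have hx : (fun i => (1 / (m:ℝ)) * (if i ∈ Q then (1 : ℝ) else 0)) =
        ∑ k ∈ range m, (1 / (m:ℝ)) •
          (fun i => if i ∈ Q.filter (fun i => b i = k) then (1:ℝ) else 0) := by
      funext i
      rw [Finset.sum_apply]
      simp only [Pi.smul_apply, smul_eq_mul]
      rw [← Finset.mul_sum]
      congr 1
      by_cases hi : i ∈ Q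
      · simp [hi, hb i hi]
      · simp [hi]
    rw [hx]
    apply (convex_convexHull ℝ _).sum_mem
    · intro k _; positivity
    · simp; field_simp
    · intro k _
      apply subset_convexHull
      exact ⟨Q.filter (fun i => b i = k), (Finset.filter_subset _ _).trans hQE, hfeas k, rfl⟩

lemma knapOPT_spec {C : ℝ} (hC : 0 < C) (w v : ι → ℝ) (A : Finset ι) :
    (∃ S ⊆ A, ∑ i ∈ S, w i ≤ C ∧ knapOPT C w v A = ∑ i ∈ S, v i) ∧
    ∀ S ⊆ A, ∑ i ∈ S, w i ≤ C → ∑ i ∈ S, v i ≤ knapOPT C w v A := by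
  have hfin : {x : ℝ | ∃ S : Finset ι, S ⊆ A ∧ (∑ i ∈ S, w i) ≤ C ∧ x = ∑ i ∈ S, v i}.Finite := by
    apply (Finset.finite_toSet (A.powerset.image (fun S => ∑ i ∈ S, v i))).subset
    rintro x ⟨S, hS, _, rfl⟩
    simp only [Finset.coe_image, Set.mem_image, Finset.mem_coe, Finset.mem_powerset]
    exact ⟨S, hS, rfl⟩
  have hne : {x : ℝ | ∃ S : Finset ι, S ⊆ A ∧ (∑ i ∈ S, w i) ≤ C ∧ x = ∑ i ∈ S, v i}.Nonempty :=
    ⟨0, ∅, by simp, by simp [hC.le], by simp⟩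
  constructor
  · obtain ⟨S, h1, h2, h3⟩ := hne.csSup_mem hfin
    exact ⟨S, h1, h2, h3⟩
  · intro S h1 h2
    exact le_csSup hfin.bddAbove ⟨S, h1, h2, rfl⟩

lemma knapOPT_mono {C : ℝ} (hC : 0 < C) (w v : ι → ℝ) {A B : Finset ι} (h : A ⊆ B) :
    knapOPT C w v A ≤ knapOPT C w v B := by
  obtain ⟨S, h1, h2, h3⟩ := (knapOPT_spec hC w v A).1
  rw [h3]
  exact (knapOPT_spec hC w v B).2 S (h1.trans h) h2

lemma knapOPT_nonneg {C : ℝ} (hC : 0 < C) (w v : ι → ℝ) (A : Finset ι) :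
    0 ≤ knapOPT C w v A := by
  have := (knapOPT_spec hC w v A).2 ∅ (by simp) (by simp [hC.le])
  simpa using this

lemma single_bound (E : Finset ι) {C : ℝ} (hC : 0 < C) (w v : ι → ℝ) {p : ℝ} (hp0 : 0 ≤ p)
    (hp1 : p ≤ 1) {i : ι} (hi : i ∈ E) (hwi : w i ≤ C) :
    p * v i ≤ sampleExp E p (fun A => knapOPT C w v A) := by
  conv_rhs => rw [← Finset.insert_erase hi]
  rw [sampleExp_insert (Finset.notMem_erase i E)]
  have h1 : v i ≤ sampleExp (E.erase i) p (fun A => knapOPT C w v (insert i A)) := by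
    rw [← sampleExp_const (E.erase i) p (v i)]
    apply sampleExp_mono hp0 hp1
    intro A _
    have := (knapOPT_spec hC w v (insert i A)).2 {i} (by simp) (by simpa using hwi)
    simpa using this
  have h2 : 0 ≤ sampleExp (E.erase i) p (fun A => knapOPT C w v A) :=
    sampleExp_nonneg hp0 hp1 fun A _ => knapOPT_nonneg hC w v A
  have h3 := mul_le_mul_of_nonneg_left h1 hp0
  have h4 := mul_nonneg (by linarith : 0 ≤ 1 - p) h2
  linarith

/-- The value class of an item of relative value `r`. -/
noncomputable def vcls (ε r : ℝ) : ℕ := ⌈Real.log r / Real.log (1 + ε)⌉₊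

lemma vcls_zero {ε r : ℝ} (hε : 0 < ε) (h : vcls ε r = 0) : r ≤ 1 := by
  have hl : 0 < Real.log (1 + ε) := Real.log_pos (by linarith)
  have := Nat.ceil_eq_zero.1 h
  by_contra hc
  push Not at hc
  have := div_pos (Real.log_pos hc) hl
  linarith

lemma vcls_succ {ε r : ℝ} (hε : 0 < ε) (hr : 0 ≤ r) {k : ℕ} (h : vcls ε r = k + 1) :
    (1 + ε) ^ k ≤ r ∧ r ≤ (1 + ε) * (1 + ε) ^ k := by
  have hl : 0 < Real.log (1 + ε) := Real.log_pos (by linarith)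
  have h1 : (k:ℝ) < Real.log r / Real.log (1 + ε) := Nat.lt_ceil.1 (by unfold vcls at h; omega)
  have h2 : Real.log r / Real.log (1 + ε) ≤ ((k + 1 : ℕ) : ℝ) := by
    rw [← h]; exact Nat.le_ceil _
  rw [lt_div_iff₀ hl, ← Real.log_pow] at h1
  rw [div_le_iff₀ hl, ← Real.log_pow] at h2
  have hr' : 0 < r := by
    rcases hr.eq_or_lt with h0 | h0
    · rw [← h0, Real.log_zero] at h1
      have := Real.log_nonneg (one_le_pow₀ (by linarith : (1:ℝ) ≤ 1 + ε) (n := k))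
      linarith
    · exact h0
  constructor
  · exact ((Real.log_lt_log_iff (by positivity) hr').1 h1).le
  · have := (Real.log_le_log_iff hr' (by positivity)).1 h2
    rw [pow_succ] at this; linarith

lemma vcls_mono {ε r s : ℝ} (hε : 0 < ε) (hr : 0 ≤ r) (h : r ≤ s) : vcls ε r ≤ vcls ε s := by
  have hl : 0 < Real.log (1 + ε) := Real.log_pos (by linarith)
  rcases hr.eq_or_lt with h0 | h0
  · rw [← h0]; simp [vcls]
  · apply Nat.ceil_mono
    exact div_le_div_of_nonneg_right (Real.log_le_log h0 h) hl.le

open Classical in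
lemma main_pos (E : Finset ι) (C : ℝ) (hC : 0 < C)
    (w v : ι → ℝ) (hw : ∀ i ∈ E, 0 < w i ∧ w i ≤ C) (hv : ∀ i ∈ E, 0 ≤ v i)
    (ε p : ℝ) (hε0 : 0 < ε) (hε1 : ε < 1 / 3) (hp0 : 0 < p) (hp1 : p ≤ 1)
    (O : ℝ) (hO : O = sampleExp E p (fun A => knapOPT C w v A)) (hOpos : 0 < O) :
    ∃ Q ⊆ E, ∑ i ∈ Q, w i ≤ (((vcls ε (1 / (ε * p)) : ℝ) + 1) * (tau ε / p + 1)) * C ∧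
      (1 - 4 * ε) * O ≤ sampleExp E p (fun A => knapOPT C w v (Q ∩ A)) := by
  obtain ⟨ht1, -⟩ := tau_ge ε hε0 (by linarith)
  have htp : 1 ≤ tau ε / p := by rw [le_div_iff₀ hp0]; linarith
  set K := vcls ε (1 / (ε * p)) with hK
  set c : ι → ℕ := fun i => vcls ε (v i / (ε * O)) with hc
  have hεO : 0 < ε * O := by positivity
  have hr0 : ∀ i ∈ E, 0 ≤ v i / (ε * O) := fun i hi => div_nonneg (hv i hi) hεO.le
  have hcK : ∀ i ∈ E, c i < K + 1 := by
    intro i hi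
    apply Nat.lt_succ_of_le
    apply vcls_mono hε0 (hr0 i hi)
    rw [div_le_div_iff₀ hεO (by positivity)]
    have := single_bound E hC w v hp0.le hp1 hi (hw i hi).2
    rw [← hO] at this
    nlinarith
  have hpre : ∀ k, ∃ Q ⊆ E.filter (fun i => c i = k), ∑ i ∈ Q, w i ≤ tau ε / p * C + C ∧
      (Q = E.filter (fun i => c i = k) ∨ tau ε / p * C ≤ ∑ i ∈ Q, w i) ∧
      ∀ a ∈ Q, ∀ b ∈ E.filter (fun i => c i = k), b ∉ Q →
        (if k = 0 then - (v a / w a) else w a) ≤ (if k = 0 then - (v b / w b) else w b) := by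
    intro k
    exact prefix_lemma _ w (fun i => if k = 0 then - (v i / w i) else w i) (by positivity) hC
      (fun i hi => hw i (Finset.mem_filter.1 hi).1)
  choose Qf hQsub hQw hQalt hQkey using hpre
  have hQE : ∀ k, Qf k ⊆ E := fun k => (hQsub k).trans (Finset.filter_subset _ _)
  set Q := E.filter (fun i => i ∈ Qf (c i)) with hQ
  have hQk : ∀ k, Q.filter (fun i => c i = k) = Qf k := by
    intro k
    ext i
    simp only [hQ, Finset.mem_filter]
    constructor
    · rintro ⟨⟨_, h⟩, rfl⟩; exact h
    · intro h
      have := Finset.mem_filter.1 (hQsub k h)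
      exact ⟨⟨this.1, by rw [this.2]; exact h⟩, this.2⟩
  have hQfQ : ∀ k, Qf k ⊆ Q := fun k => by rw [← hQk k]; exact Finset.filter_subset _ _
  have hQE' : Q ⊆ E := Finset.filter_subset _ _
  refine ⟨Q, hQE', ?_, ?_⟩
  · rw [← Finset.sum_fiberwise_of_maps_to
      (fun i hi => Finset.mem_range.2 (hcK i (hQE' hi))) w]
    calc ∑ k ∈ range (K + 1), ∑ i ∈ Q with c i = k, w i
        ≤ ∑ k ∈ range (K + 1), (tau ε / p * C + C) := by
          apply Finset.sum_le_sum
          intro k _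
          rw [hQk]; exact hQw k
      _ = _ := by
          rw [Finset.sum_const, Finset.card_range, nsmul_eq_mul]
          push_cast; ring
  obtain ⟨G, hG⟩ : ∃ G : ℕ → Finset ι → Prop, ∀ k A, G k A ↔
    (Qf k = E.filter (fun i => c i = k) ∨ C ≤ ∑ i ∈ A ∩ Qf k, w i) := ⟨_, fun _ _ => Iff.rfl⟩
  have hint : ∀ k A, A ∩ Qf k = A.filter (fun i => c i = k) ∩ Qf k := by
    intro k A
    ext i
    simp only [Finset.mem_inter, Finset.mem_filter]
    constructor
    · rintro ⟨h1, h2⟩; exact ⟨⟨h1, (Finset.mem_filter.1 (hQsub k h2)).2⟩, h2⟩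
    · rintro ⟨⟨h1, _⟩, h2⟩; exact ⟨h1, h2⟩
  have hmask := mask_lemma E hp0 hp1 (ε := ε) (by linarith) c (K + 1) G
    (by
      intro k A B hAB
      simp only [hG]
      rw [hint k A, hint k B, hAB])
    (by
      intro k A B hAB h
      rw [hG] at h ⊢
      rcases h with h | h
      · exact Or.inl h
      · right
        refine h.trans ?_
        apply Finset.sum_le_sum_of_subset_of_nonneg (Finset.inter_subset_inter_right hAB)
        intro i hi _
        exact (hw i (hQE k (Finset.mem_inter.1 hi).2)).1.le)
    (by
      intro k
      rw [hG]
      rcases hQalt k with h | h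
      · exact Or.inl h
      · right
        rw [Finset.inter_eq_right.2 (hQE k)]
        nlinarith)
    (by
      intro k
      rcases hQalt k with h | h
      · have : sampleExp E p (fun A => if G k A then (1:ℝ) else 0) = 1 := by
          refine Eq.trans ?_ (sampleExp_const E p 1)
          apply sampleExp_congr
          intro A _
          exact if_pos ((hG k A).2 (Or.inl h))
        rw [this]; linarith
      · refine (chernoff E hp0 hp1 hε0 (by linarith) hC w (Qf k) (hQE k)
          (fun i hi => hw i (hQE k hi)) h).trans ?_
        apply sampleExp_mono hp0.le hp1
        intro A _
        by_cases hA : C ≤ ∑ i ∈ A ∩ Qf k, w i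
        · rw [if_pos hA, if_pos ((hG k A).2 (Or.inr hA))]
        · rw [if_neg hA]; split_ifs <;> norm_num)
    (fun A => knapOPT C w v A) (fun A _ => knapOPT_nonneg hC w v A)
    (fun A B h _ => knapOPT_mono hC w v h)
    (by
      intro y hy
      obtain ⟨S, hS, hSw, hSv⟩ := (knapOPT_spec hC w v y).1
      refine ⟨fun k => ∑ i ∈ S with c i = k, v i, ?_, ?_, ?_⟩
      · intro k
        exact Finset.sum_nonneg fun i hi => hv i (hy (hS (Finset.mem_filter.1 hi).1))
      · rw [hSv]
        exact (Finset.sum_fiberwise_of_maps_to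
          (fun i hi => Finset.mem_range.2 (hcK i (hy (hS hi)))) v).symm
      · intro J
        have h1 : ∑ k ∈ range (K + 1), (if J k then ∑ i ∈ S with c i = k, v i else 0) =
            ∑ i ∈ S.filter (fun i => J (c i)), v i := by
          rw [← Finset.sum_fiberwise_of_maps_to (s := S.filter (fun i => J (c i)))
            (t := range (K + 1)) (g := c)
            (fun i hi => Finset.mem_range.2 (hcK i (hy (hS (Finset.mem_filter.1 hi).1)))) v]
          apply Finset.sum_congr rfl
          intro k _
          by_cases hJ : J k
          · rw [if_pos hJ]
            congr 1
            ext i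
            simp only [Finset.mem_filter]
            constructor
            · rintro ⟨h1, h2⟩; exact ⟨⟨h1, by rw [h2]; exact hJ⟩, h2⟩
            · rintro ⟨⟨h1, _⟩, h2⟩; exact ⟨h1, h2⟩
          · rw [if_neg hJ, Finset.filter_eq_empty_iff.2, Finset.sum_empty]
            intro i hi h
            exact hJ (h ▸ (Finset.mem_filter.1 hi).2)
        rw [h1]
        apply (knapOPT_spec hC w v _).2
        · exact Finset.filter_subset_filter _ hS
        · refine le_trans ?_ hSw
          apply Finset.sum_le_sum_of_subset_of_nonneg (Finset.filter_subset _ _)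
          intro i hi _
          exact (hw i (hy (hS hi))).1.le)
  have hdet : ∀ R ⊆ E, (1 - ε) * knapOPT C w v (R.filter (fun i => G (c i) R)) + (-(ε * O)) ≤
      knapOPT C w v (Q ∩ R) := by
    intro R hR
    obtain ⟨S, hS, hSw, hSv⟩ := (knapOPT_spec hC w v (R.filter (fun i => G (c i) R))).1
    have hSR : S ⊆ R := hS.trans (Finset.filter_subset _ _)
    have hSE : S ⊆ E := hSR.trans hR
    have hcls : ∀ k, ∃ T ⊆ R ∩ Qf k, ∑ i ∈ T, w i ≤ ∑ i ∈ S with c i = k, w i ∧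
        (1 - ε) * ∑ i ∈ S with c i = k, v i + (if k = 0 then -(ε * O) else 0) ≤ ∑ i ∈ T, v i := by
      intro k
      have hkS : ∀ i ∈ S.filter (fun i => c i = k), i ∈ E ∧ c i = k ∧ i ∈ R := fun i hi =>
        ⟨hSE (Finset.mem_filter.1 hi).1, (Finset.mem_filter.1 hi).2, hSR (Finset.mem_filter.1 hi).1⟩
      have hkB : ∀ i ∈ R ∩ Qf k, i ∈ E ∧ c i = k := fun i hi =>
        Finset.mem_filter.1 (hQsub k (Finset.mem_inter.1 hi).2)
      have hvS0 : 0 ≤ ∑ i ∈ S with c i = k, v i :=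
        Finset.sum_nonneg fun i hi => hv i (hkS i hi).1
      have hi0 : (if k = 0 then -(ε * O) else 0) ≤ 0 := by split_ifs <;> linarith
      by_cases hsub : S.filter (fun i => c i = k) ⊆ R ∩ Qf k
      · exact ⟨_, hsub, le_rfl, by nlinarith⟩
      rw [Finset.not_subset] at hsub
      obtain ⟨i0, hi0S, hi0B⟩ := hsub
      have hi0' := hkS i0 hi0S
      have hGk : G k R := by
        have := (Finset.mem_filter.1 (hS (Finset.mem_filter.1 hi0S).1)).2
        rwa [hi0'.2.1] at this
      have hCB : C ≤ ∑ i ∈ R ∩ Qf k, w i := by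
        rcases (hG k R).1 hGk with h | h
        · exfalso
          apply hi0B
          rw [Finset.mem_inter, h, Finset.mem_filter]
          exact ⟨hi0'.2.2, hi0'.1, hi0'.2.1⟩
        · exact h
      have hSk : ∑ i ∈ S with c i = k, w i ≤ C := by
        refine le_trans ?_ hSw
        apply Finset.sum_le_sum_of_subset_of_nonneg (Finset.filter_subset _ _)
        intro i hi _
        exact (hw i (hSE hi)).1.le
      have hkey : ∀ a ∈ R ∩ Qf k, ∀ b ∈ S.filter (fun i => c i = k), b ∉ R ∩ Qf k →
          (if k = 0 then - (v a / w a) else w a) ≤ (if k = 0 then - (v b / w b) else w b) := by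
        intro a ha b hb hbn
        apply hQkey k a (Finset.mem_inter.1 ha).2 b
        · exact Finset.mem_filter.2 ⟨(hkS b hb).1, (hkS b hb).2.1⟩
        · intro h; exact hbn (Finset.mem_inter.2 ⟨(hkS b hb).2.2, h⟩)
      rcases Nat.eq_zero_or_pos k with hk | hk
      · obtain ⟨T, hT1, hT2, hT3⟩ := replace_small (R ∩ Qf k) (S.filter (fun i => c i = k)) w v
          hεO.le (fun i hi => (hw i (hkB i hi).1).1) (fun i hi => (hw i (hkS i hi).1).1)
          (fun i hi => ⟨hv i (hkB i hi).1, by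
            have h1 := vcls_zero hε0 ((hkB i hi).2.trans hk)
            rwa [div_le_one hεO] at h1⟩)
          (fun i hi => hv i (hkS i hi).1)
          (fun a ha b hb hbn => by
            have := hkey a ha b hb hbn
            rw [if_pos hk, if_pos hk] at this
            linarith) hCB hSk
        refine ⟨T, hT1, hT2, ?_⟩
        rw [if_pos hk]
        nlinarith
      · obtain ⟨j, rfl⟩ : ∃ j, k = j + 1 := ⟨k - 1, by omega⟩
        have hval : ∀ i ∈ E, c i = j + 1 →
            (1 + ε) ^ j * (ε * O) ≤ v i ∧ v i ≤ (1 + ε) * ((1 + ε) ^ j * (ε * O)) := by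
          intro i hi hci
          obtain ⟨h1, h2⟩ := vcls_succ hε0 (hr0 i hi) hci
          rw [le_div_iff₀ hεO] at h1
          rw [div_le_iff₀ hεO] at h2
          exact ⟨h1, by linarith⟩
        obtain ⟨T, hT1, hT2, hT3⟩ := replace_large (R ∩ Qf (j + 1))
          (S.filter (fun i => c i = j + 1)) w v (V := (1 + ε) ^ j * (ε * O)) hε0 (by positivity)
          (fun i hi => (hw i (hkS i hi).1).1)
          (fun i hi => (hval i (hkB i hi).1 (hkB i hi).2).1)
          (fun i hi => hval i (hkS i hi).1 (hkS i hi).2.1)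
          (fun a ha b hb hbn => by
            have := hkey a ha b hb hbn
            rwa [if_neg (by omega), if_neg (by omega)] at this) hCB hSk
        refine ⟨T, hT1, hT2, ?_⟩
        rw [if_neg (by omega)]
        linarith
    choose T hTsub hTw hTv using hcls
    have hdisj : Set.PairwiseDisjoint (↑(range (K + 1))) T := by
      intro k _ l _ hkl
      rw [Function.onFun, Finset.disjoint_left]
      intro i hi hi'
      have h1 := (Finset.mem_filter.1 (hQsub k (Finset.mem_inter.1 (hTsub k hi)).2)).2
      have h2 := (Finset.mem_filter.1 (hQsub l (Finset.mem_inter.1 (hTsub l hi')).2)).2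
      exact hkl (h1.symm.trans h2)
    have hmaps : ∀ i ∈ S, c i ∈ range (K + 1) := fun i hi => Finset.mem_range.2 (hcK i (hSE hi))
    have hfin := (knapOPT_spec hC w v (Q ∩ R)).2 ((range (K + 1)).biUnion T)
      (by
        intro i hi
        obtain ⟨k, _, hk⟩ := Finset.mem_biUnion.1 hi
        have := Finset.mem_inter.1 (hTsub k hk)
        exact Finset.mem_inter.2 ⟨hQfQ k this.2, this.1⟩)
      (by
        rw [Finset.sum_biUnion hdisj]
        refine (Finset.sum_le_sum fun k _ => hTw k).trans ?_
        rw [Finset.sum_fiberwise_of_maps_to hmaps w]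
        exact hSw)
    refine le_trans ?_ hfin
    rw [Finset.sum_biUnion hdisj]
    refine le_trans (le_of_eq ?_) (Finset.sum_le_sum fun k _ => hTv k)
    rw [Finset.sum_add_distrib, ← Finset.mul_sum, Finset.sum_fiberwise_of_maps_to hmaps v, hSv]
    simp
  have hE := sampleExp_mono hp0.le hp1 hdet
  rw [sampleExp_add, sampleExp_mul, sampleExp_const] at hE
  rw [← hO] at hmask
  have h1 := mul_le_mul_of_nonneg_left hmask (by linarith : 0 ≤ 1 - ε)
  nlinarith [mul_nonneg (mul_nonneg hε0.le hε0.le) hOpos.le]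

end aux

/-- **Knapsack Sparsifier Performance** (Theorem 3.2): for every knapsack instance,
`ε ∈ (0,1/3)` and `p ∈ (0,1]`, there is a query set `Q ⊆ E` of polyhedral degree
`d ≤ 2(K+1)(τ(ε)/p + 1)` (with `K = ⌈ln(1/(εp))/ln(1+ε)⌉`) which is a
`(1-4ε)`-approximate sparsifier. -/
theorem knapsack_sparsifier {ι : Type*} [DecidableEq ι]
    (E : Finset ι) (C : ℝ) (hC : 0 < C)
    (w v : ι → ℝ) (hw : ∀ i ∈ E, 0 < w i ∧ w i ≤ C) (hv : ∀ i ∈ E, 0 ≤ v i)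
    (ε p : ℝ) (hε : ε ∈ Set.Ioo (0 : ℝ) (1 / 3)) (hp : p ∈ Set.Ioc (0 : ℝ) 1) :
    ∃ (Q : Finset ι) (d : ℝ), Q ⊆ E ∧ 1 ≤ d ∧
      d ≤ 2 * ((⌈Real.log (1 / (ε * p)) / Real.log (1 + ε)⌉₊ : ℝ) + 1) * (tau ε / p + 1) ∧
      (fun i => (1 / d) * (if i ∈ Q then (1 : ℝ) else 0)) ∈
        convexHull ℝ {x : ι → ℝ | ∃ S : Finset ι, S ⊆ E ∧ (∑ i ∈ S, w i) ≤ C ∧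
          x = fun i => if i ∈ S then (1 : ℝ) else 0} ∧
      (1 - 4 * ε) * sampleExp E p (fun A => knapOPT C w v A)
        ≤ sampleExp E p (fun A => knapOPT C w v (Q ∩ A)) := by

  obtain ⟨hε0, hε1⟩ := hε
  obtain ⟨hp0, hp1⟩ := hp
  obtain ⟨ht1, -⟩ := tau_ge ε hε0 (by linarith)
  have htp : 1 ≤ tau ε / p := by rw [le_div_iff₀ hp0]; linarith
  set K := ⌈Real.log (1 / (ε * p)) / Real.log (1 + ε)⌉₊ with hK
  have hK0 : (0:ℝ) ≤ K := Nat.cast_nonneg K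
  have hT : 1 ≤ 2 * (((K:ℝ) + 1) * (tau ε / p + 1)) := by nlinarith
  have hOnn : 0 ≤ sampleExp E p (fun A => knapOPT C w v A) :=
    sampleExp_nonneg hp0.le hp1 fun A _ => knapOPT_nonneg hC w v A
  have main : ∃ Q ⊆ E, ∑ i ∈ Q, w i ≤ (((K:ℝ) + 1) * (tau ε / p + 1)) * C ∧
      (1 - 4 * ε) * sampleExp E p (fun A => knapOPT C w v A)
        ≤ sampleExp E p (fun A => knapOPT C w v (Q ∩ A)) := by
    rcases hOnn.eq_or_lt with h0 | h0
    · refine ⟨∅, by simp, ?_, ?_⟩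
      · rw [Finset.sum_empty]; nlinarith
      · rw [← h0, mul_zero]
        exact sampleExp_nonneg hp0.le hp1 fun A _ => knapOPT_nonneg hC w v _
    · exact main_pos E C hC w v hw hv ε p hε0 hε1 hp0 hp1 _ rfl h0
  obtain ⟨Q, hQE, hQw, hQ⟩ := main
  obtain ⟨d, hd1, hd2, hd3⟩ := degree_lemma E w hC Q hQE (fun i hi => hw i (hQE hi)) _ hT hQw
  exact ⟨Q, d, hQE, hd1, by linarith, hd3, hQ⟩
end

section
/- Let E be a finite set, C > 0 a real number, and w : E → ℝ with 0 < w_i ≤ C for all i ∈ E. Then for every vector x ∈ ℝ^E with 0 ≤ x_i ≤ 1 for all i and ∑_{i∈E} x_i·w_i ≤ C, the vector (1/2)·x lies in the convex hull in ℝ^E of the indicator vectors {1_S : S ⊆ E, ∑_{i∈S} w_i ≤ C}. -/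
open Finset

/-- the feasible indicator vectors -/
def KnapSet {ι : Type*} [DecidableEq ι] (E : Finset ι) (C : ℝ) (w : ι → ℝ) : Set (ι → ℝ) :=
  {y : ι → ℝ | ∃ S : Finset ι, S ⊆ E ∧ (∑ i ∈ S, w i) ≤ C ∧
        y = fun i => if i ∈ S then (1 : ℝ) else 0}

lemma knap_move {ι : Type*} [DecidableEq ι]
    (E : Finset ι) (C : ℝ) (w : ι → ℝ) (hw : ∀ i ∈ E, 0 < w i ∧ w i ≤ C)
    (x : ι → ℝ) (hx : ∀ i ∈ E, 0 ≤ x i ∧ x i ≤ 1) (hx0 : ∀ i ∉ E, x i = 0)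
    (hxw : (∑ i ∈ E, x i * w i) ≤ C) (i j : ι) (hij : i ≠ j) (hi : i ∈ E) (hj : j ∈ E)
    (hi0 : 0 < x i) (hi1 : x i < 1) (hj0 : 0 < x j) (hj1 : x j < 1) :
    ∃ t : ℝ, 0 < t ∧ ∃ y : ι → ℝ,
      (∀ k, y k = x k + t * ((if k = i then w j else 0) - (if k = j then w i else 0))) ∧
      (∀ i ∈ E, 0 ≤ y i ∧ y i ≤ 1) ∧ (∀ i ∉ E, y i = 0) ∧ (∑ i ∈ E, y i * w i) ≤ C ∧
      (E.filter (fun k => 0 < y k ∧ y k < 1)).card <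
        (E.filter (fun k => 0 < x k ∧ x k < 1)).card := by
  have wi := (hw i hi).1
  have wj := (hw j hj).1
  obtain ⟨t, ht, h1, h2, h3⟩ : ∃ t : ℝ, 0 < t ∧ x i + t * w j ≤ 1 ∧ 0 ≤ x j - t * w i ∧
      (x i + t * w j = 1 ∨ x j - t * w i = 0) := by
    rcases le_total ((1 - x i) / w j) (x j / w i) with h | h
    · refine ⟨(1 - x i) / w j, div_pos (by linarith) wj, ?_, ?_, Or.inl ?_⟩
      · rw [div_mul_cancel₀ _ wj.ne']; linarith
      · rw [le_div_iff₀ wi] at h; linarith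
      · rw [div_mul_cancel₀ _ wj.ne']; linarith
    · refine ⟨x j / w i, div_pos hj0 wi, ?_, ?_, Or.inr ?_⟩
      · rw [le_div_iff₀ wj] at h; linarith
      · rw [div_mul_cancel₀ _ wi.ne']; linarith
      · rw [div_mul_cancel₀ _ wi.ne']; linarith
  have p1 : 0 < t * w j := mul_pos ht wj
  have p2 : 0 < t * w i := mul_pos ht wi
  obtain ⟨y, hy⟩ : ∃ y : ι → ℝ, ∀ k, y k = x k + t * ((if k = i then w j else 0) -
    (if k = j then w i else 0)) := ⟨_, fun k => rfl⟩
  have yi : y i = x i + t * w j := by rw [hy]; simp [hij]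
  have yj : y j = x j - t * w i := by rw [hy]; simp [hij.symm]; ring
  have yk : ∀ k, k ≠ i → k ≠ j → y k = x k := by
    intro k a b; rw [hy]; simp [a, b]
  refine ⟨t, ht, y, hy, ?_, ?_, ?_, ?_⟩
  · intro k hk
    by_cases a : k = i
    · subst a; rw [yi]; constructor <;> linarith
    by_cases b : k = j
    · subst b; rw [yj]; constructor <;> linarith
    rw [yk k a b]; exact hx k hk
  · intro k hk
    rw [yk k (by rintro rfl; exact hk hi) (by rintro rfl; exact hk hj)]; exact hx0 k hk
  · have : ∑ k ∈ E, y k * w k = ∑ k ∈ E, x k * w k := by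
      have e : ∀ k, y k * w k = x k * w k + ((if k = i then t * w j * w i else 0) -
          (if k = j then t * w i * w j else 0)) := by
        intro k
        rw [hy]
        by_cases a : k = i
        · subst a; simp [hij]; ring
        by_cases b : k = j
        · subst b; simp [a]; ring
        simp [a, b]
      simp only [e, Finset.sum_add_distrib, Finset.sum_sub_distrib, Finset.sum_ite_eq', hi, hj,
        if_true]
      ring
    linarith
  · apply Finset.card_lt_card
    rw [Finset.ssubset_iff_of_subset]
    · rcases h3 with h3 | h3
      · exact ⟨i, by simp [hi, hi0, hi1], by simp [yi, h3]⟩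
      · exact ⟨j, by simp [hj, hj0, hj1], by simp [yj, h3]⟩
    · intro k hk
      simp only [Finset.mem_filter] at hk ⊢
      by_cases a : k = i
      · subst a; exact ⟨hi, hi0, hi1⟩
      by_cases b : k = j
      · subst b; exact ⟨hj, hj0, hj1⟩
      rwa [yk k a b] at hk

lemma knap_main {ι : Type*} [DecidableEq ι]
    (E : Finset ι) (C : ℝ) (hC : 0 < C) (w : ι → ℝ) (hw : ∀ i ∈ E, 0 < w i ∧ w i ≤ C) (n : ℕ) :
    ∀ (x : ι → ℝ), (∀ i ∈ E, 0 ≤ x i ∧ x i ≤ 1) → (∀ i ∉ E, x i = 0) →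
    (∑ i ∈ E, x i * w i) ≤ C → (E.filter (fun k => 0 < x k ∧ x k < 1)).card = n →
    (fun i => (1 / 2) * x i) ∈ convexHull ℝ (KnapSet E C w) := by
  induction n using Nat.strong_induction_on with
  | _ n ih =>
  intro x hx hx0 hxw hn
  have hconv := convex_convexHull ℝ (KnapSet E C w)
  by_cases hcard : 1 < (E.filter (fun k => 0 < x k ∧ x k < 1)).card
  · obtain ⟨i, hi, j, hj, hij⟩ := Finset.one_lt_card.1 hcard
    simp only [Finset.mem_filter] at hi hj
    obtain ⟨hi, hi0, hi1⟩ := hi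
    obtain ⟨hj, hj0, hj1⟩ := hj
    obtain ⟨t, ht, y, hy, a1, a2, a3, a4⟩ :=
      knap_move E C w hw x hx hx0 hxw i j hij hi hj hi0 hi1 hj0 hj1
    obtain ⟨s, hs, z, hz, b1, b2, b3, b4⟩ :=
      knap_move E C w hw x hx hx0 hxw j i hij.symm hj hi hj0 hj1 hi0 hi1
    have hY := ih _ (hn ▸ a4) y a1 a2 a3 rfl
    have hZ := ih _ (hn ▸ b4) z b1 b2 b3 rfl
    have hst : 0 < s + t := by linarith
    have := hconv hY hZ (a := s / (s + t)) (b := t / (s + t)) (by positivity) (by positivity)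
      (by field_simp)
    convert this using 1
    funext k
    simp only [Pi.add_apply, Pi.smul_apply, smul_eq_mul, hy, hz]
    field_simp
    ring
  · have hsub : ∀ S : Finset ι, S ⊆ E → (∑ i ∈ S, w i) ≤ C →
        (fun i => if i ∈ S then (1 : ℝ) else 0) ∈ convexHull ℝ (KnapSet E C w) :=
      fun S h1 h2 => subset_convexHull ℝ _ ⟨S, h1, h2, rfl⟩
    have hS := hsub (E.filter (fun k => x k = 1)) (Finset.filter_subset _ _) (by
      refine le_trans ?_ hxw
      rw [Finset.sum_filter]
      apply Finset.sum_le_sum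
      intro k hk
      split_ifs with h
      · simp [h]
      · exact mul_nonneg (hx k hk).1 (hw k hk).1.le)
    have h0 := hsub ∅ (by simp) (by simpa using hC.le)
    have hT : ∃ T ∈ convexHull ℝ (KnapSet E C w),
        ∀ k, x k = (if k ∈ E.filter (fun k => x k = 1) then (1 : ℝ) else 0) + T k := by
      have key : ∀ k, ¬ (k ∈ E.filter (fun k => 0 < x k ∧ x k < 1)) →
          x k = (if k ∈ E.filter (fun k => x k = 1) then (1 : ℝ) else 0) := by
        intro k hk
        simp only [Finset.mem_filter] at hk ⊢
        by_cases hE : k ∈ E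
        · have := hx k hE
          split_ifs with h
          · exact h.2
          · rcases this.1.lt_or_eq with h' | h'
            · rcases this.2.lt_or_eq with h'' | h''
              · exact absurd ⟨hE, h', h''⟩ hk
              · exact absurd ⟨hE, h''⟩ h
            · exact h'.symm
        · simp [hE, hx0 k hE]
      rcases Finset.eq_empty_or_nonempty (E.filter (fun k => 0 < x k ∧ x k < 1)) with he | ⟨i, hi⟩
      · refine ⟨_, h0, fun k => ?_⟩
        have := key k (by simp [he])
        simpa using this
      · have hi' := Finset.mem_filter.1 hi
        have h1 := hsub {i} (by simpa using hi'.1) (by simpa using (hw i hi'.1).2)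
        refine ⟨_, hconv h1 h0 (a := x i) (b := 1 - x i) hi'.2.1.le (by linarith [hi'.2.2])
          (by ring), fun k => ?_⟩
        by_cases hk : k = i
        · subst hk
          simp [hi'.2.2.ne]
        · have := key k (fun hk' => hk (Finset.card_le_one.1 (not_lt.1 hcard) k hk' i hi))
          simpa [hk] using this
    obtain ⟨T, hT, hxT⟩ := hT
    have := hconv hS hT (a := 1 / 2) (b := 1 / 2) (by norm_num) (by norm_num) (by norm_num)
    convert this using 1
    funext k
    simp only [Pi.add_apply, Pi.smul_apply, smul_eq_mul]
    rw [← mul_add, ← hxT k]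

/-- **Knapsack integrality gap ≤ 2** (with feasible singletons): any fractional point
`x` of the LP relaxation, halved, lies in the convex hull of indicator vectors of
feasible item sets. -/
theorem knapsack_half_LP_in_integer_hull {ι : Type*} [DecidableEq ι]
    (E : Finset ι) (C : ℝ) (hC : 0 < C)
    (w : ι → ℝ) (hw : ∀ i ∈ E, 0 < w i ∧ w i ≤ C)
    (x : ι → ℝ) (hx : ∀ i ∈ E, 0 ≤ x i ∧ x i ≤ 1) (hx0 : ∀ i ∉ E, x i = 0)
    (hxw : (∑ i ∈ E, x i * w i) ≤ C) :
    (fun i => (1 / 2) * x i) ∈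
      convexHull ℝ {y : ι → ℝ | ∃ S : Finset ι, S ⊆ E ∧ (∑ i ∈ S, w i) ≤ C ∧
        y = fun i => if i ∈ S then (1 : ℝ) else 0} := by
  exact knap_main E C hC w hw _ x hx hx0 hxw rfl
end
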